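/- arXiv:2011.14811 — 3 statements merged into one kernel-verified Lean document; each statement's English description precedes it below -/
import Mathlib

section
/- Let A ∈ ℂ^{n×n} be sectorial. Then there exists a matrix R ∈ ℂ^{n×n} with rank(R) = prank(A) such that A − R is Hermitian positive definite. -/
noncomputable section

open Matrix
open scoped Classical ComplexOrder

namespace LowPrank

variable {n : ℕ}

/-- A matrix is sectorial if its numerical range does not contain `0`
(`star x ⬝ᵥ x = 1` encodes `‖x‖₂ = 1`). -/
def IsSectorial (A : Matrix (Fin n) (Fin n) ℂ) : Prop :=
  ∀ x : Fin n → ℂ, star x ⬝ᵥ x = 1 → star x ⬝ᵥ A.mulVec x ≠ 0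

/-- The diagonal unitary matrix `diag (e^{iφ₁}, …, e^{iφₙ})`. -/
def phaseDiag (φ : Fin n → ℝ) : Matrix (Fin n) (Fin n) ℂ :=
  Matrix.diagonal fun k => Complex.exp (Complex.I * (φ k : ℂ))

/-- `A = Tᴴ diag (e^{iφ₁}, …, e^{iφₙ}) T` with `T` invertible. -/
def IsSectorialDecomp (A T : Matrix (Fin n) (Fin n) ℂ) (φ : Fin n → ℝ) : Prop :=
  IsUnit T ∧ A = Tᴴ * phaseDiag φ * T

/-- `φ` is the (sorted, normalized) vector of canonical phases of `A`:
nonincreasing, spread `< π`, midpoint of the range in `(-π, π]`, and realizing a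
sectorial decomposition of `A`. -/
def IsCanonicalPhases (A : Matrix (Fin n) (Fin n) ℂ) (φ : Fin n → ℝ) : Prop :=
  Antitone φ ∧ (∀ i j, φ i - φ j < Real.pi) ∧
    (-Real.pi < ((⨆ i, φ i) + ⨅ i, φ i) / 2) ∧ (((⨆ i, φ i) + ⨅ i, φ i) / 2 ≤ Real.pi) ∧
    ∃ T, IsSectorialDecomp A T φ

/-- The canonical phases `φ₁(A) ≥ ⋯ ≥ φₙ(A)` of a sectorial matrix
(`phases A k` is the `(k+1)`-st largest canonical phase). -/
noncomputable def phases (A : Matrix (Fin n) (Fin n) ℂ) : Fin n → ℝ :=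
  if h : ∃ φ, IsCanonicalPhases A φ then h.choose else 0

/-- The phase-rank: the number of nonzero canonical phases. -/
noncomputable def prank (A : Matrix (Fin n) (Fin n) ℂ) : ℕ :=
  {k : Fin n | phases A k ≠ 0}.ncard

/-- Positive-imaginary: sectorial with all canonical phases in `[0, π)`. -/
def PositiveImaginary (A : Matrix (Fin n) (Fin n) ℂ) : Prop :=
  IsSectorial A ∧ ∀ k, phases A k ∈ Set.Ico 0 Real.pi

/-- Symmetric gauge function. -/
structure IsSymmetricGauge (Φ : (Fin n → ℝ) → ℝ) : Prop where
  pos : ∀ x, x ≠ 0 → 0 < Φ x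
  smul : ∀ (ρ : ℝ) (x), Φ (ρ • x) = |ρ| * Φ x
  subadd : ∀ x y, Φ (x + y) ≤ Φ x + Φ y
  perm : ∀ (σ : Equiv.Perm (Fin n)) (x), Φ (x ∘ σ) = Φ x
  abs : ∀ x, Φ (fun k => |x k|) = Φ x

/-- The set `S_p(A, r)` of `r`-half-truncations of `A`. -/
def Sp (A : Matrix (Fin n) (Fin n) ℂ) (r : ℕ) : Set (Matrix (Fin n) (Fin n) ℂ) :=
  {E | ∃ T, IsSectorialDecomp A T (phases A) ∧
    E = Tᴴ * Matrix.diagonal (fun k : Fin n =>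
      if (k : ℕ) < r then Complex.exp (Complex.I * ((phases A k / 2 : ℝ) : ℂ)) else 1) * T}


lemma exists_phase (P Q : ℂ) : ∃ c : ℂ, star c * c = 1 ∧ ∃ l : ℝ, 0 ≤ l ∧
    star c * P + c * Q = l := by
  have key : ∃ c : ℂ, star c * c = 1 ∧ (star c * P + c * Q).im = 0 := by
    by_cases hd : Q - star P = 0
    · refine ⟨1, by simp, ?_⟩
      have : Q = star P := by linear_combination hd
      simp [this]
    · have hn : (‖Q - star P‖ : ℂ) ≠ 0 := by simpa using hd
      have hm : star (Q - star P) * (Q - star P) = (‖Q - star P‖ : ℂ) ^ 2 :=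
        RCLike.conj_mul _
      refine ⟨star (Q - star P) / ‖Q - star P‖, ?_, ?_⟩
      · rw [star_div₀, star_star]
        have : star (‖Q - star P‖ : ℂ) = ‖Q - star P‖ := Complex.conj_ofReal _
        rw [this]
        field_simp
        rw [mul_comm, hm]
      · set c := star (Q - star P) / (‖Q - star P‖ : ℂ) with hc
        have h1 : c * (Q - star P) = (‖Q - star P‖ : ℂ) := by
          rw [hc, div_mul_eq_mul_div, hm]; field_simp
        have h2 : (c * (Q - star P)).im = 0 := by rw [h1]; simp
        simp only [Complex.star_def, Complex.mul_im, Complex.sub_im, Complex.sub_re,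
          Complex.conj_re, Complex.conj_im, Complex.add_im] at h2 ⊢
        linarith
  obtain ⟨c, hc, him⟩ := key
  have hre : star c * P + c * Q = ((star c * P + c * Q).re : ℂ) := by
    apply Complex.ext <;> simp only [Complex.ofReal_re, Complex.ofReal_im, him]
  rcases le_total 0 (star c * P + c * Q).re with h | h
  · exact ⟨c, hc, _, h, hre⟩
  · refine ⟨-c, by simpa using hc, -(star c * P + c * Q).re, by linarith, ?_⟩
    rw [Complex.ofReal_neg, ← hre, star_neg]; ring

lemma exists_phase' (P Q w : ℂ) (hw : w ≠ 0) : ∃ c : ℂ, star c * c = 1 ∧ ∃ l : ℝ, 0 ≤ l ∧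
    star c * P + c * Q = l * w := by
  obtain ⟨c, hc, l, hl, h⟩ := exists_phase (P / w) (Q / w)
  refine ⟨c, hc, l, hl, ?_⟩
  rw [← h]; field_simp

/-- the quadratic form -/
def qf (A : Matrix (Fin n) (Fin n) ℂ) (x : Fin n → ℂ) : ℂ := star x ⬝ᵥ A.mulVec x

lemma qf_comb (A : Matrix (Fin n) (Fin n) ℂ) (x y : Fin n → ℂ) (a b : ℂ) :
    qf A (a • x + b • y) = star a * a * qf A x + star b * b * qf A y +
      (star a * b * (star x ⬝ᵥ A.mulVec y) + star b * a * (star y ⬝ᵥ A.mulVec x)) := by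
  simp only [qf, mulVec_add, mulVec_smul, star_add, star_smul, add_dotProduct, dotProduct_add,
    smul_dotProduct, dotProduct_smul, smul_eq_mul]
  ring

lemma qf_smul (A : Matrix (Fin n) (Fin n) ℂ) (x : Fin n → ℂ) (a : ℂ) :
    qf A (a • x) = star a * a * qf A x := by
  simp only [qf, mulVec_smul, star_smul, smul_dotProduct, dotProduct_smul, smul_eq_mul]
  ring

lemma exists_normalize (x : Fin n → ℂ) (hx : x ≠ 0) : ∃ r : ℝ, 0 < r ∧
    star ((r : ℂ) • x) ⬝ᵥ ((r : ℂ) • x) = 1 := by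
  have h : 0 < star x ⬝ᵥ x := dotProduct_star_self_pos_iff.mpr hx
  obtain ⟨h1, h2⟩ := Complex.pos_iff.mp h
  have h3 : star x ⬝ᵥ x = ((star x ⬝ᵥ x).re : ℂ) := by
    apply Complex.ext <;> simp [← h2]
  set s := (star x ⬝ᵥ x).re
  refine ⟨(√s)⁻¹, by positivity, ?_⟩
  have hs : (√s) * √s = s := Real.mul_self_sqrt h1.le
  rw [star_smul, smul_dotProduct, dotProduct_smul, h3]
  simp only [Complex.star_def, Complex.conj_ofReal, smul_eq_mul]
  norm_cast
  have : √s ≠ 0 := by positivity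
  field_simp
  nlinarith

lemma qf_ne_zero {A : Matrix (Fin n) (Fin n) ℂ} (hA : IsSectorial A) {x : Fin n → ℂ}
    (hx : x ≠ 0) : qf A x ≠ 0 := by
  obtain ⟨r, hr, h⟩ := exists_normalize x hx
  intro h0
  apply hA _ h
  change qf A _ = 0
  rw [qf_smul, h0, mul_zero]

/-- No two values of the quadratic form are antipodal. -/
lemma antipodal {A : Matrix (Fin n) (Fin n) ℂ} (hA : IsSectorial A) {x y : Fin n → ℂ}
    (hx : x ≠ 0) : qf A x + qf A y ≠ 0 := by
  intro hs
  · have ha := qf_ne_zero hA hx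
    obtain ⟨c, hc, l, hl, h⟩ := exists_phase' (star x ⬝ᵥ A.mulVec y) (star y ⬝ᵥ A.mulVec x)
      (qf A x) ha
    set s : ℝ := (l + √(l ^ 2 + 4)) / 2 with hsdef
    have hsq : √(l ^ 2 + 4) * √(l ^ 2 + 4) = l ^ 2 + 4 := Real.mul_self_sqrt (by positivity)
    have hspos : 0 < s := by positivity
    have hseq : 1 - s * s + s * l = 0 := by rw [hsdef]; nlinarith
    have hseqC : (1 : ℂ) - s * s + s * l = 0 := by exact_mod_cast hseq
    have hz0 : qf A (c • x + (s : ℂ) • y) = 0 := by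
      rw [qf_comb, hc]
      simp only [Complex.star_def, Complex.conj_ofReal] at h ⊢
      linear_combination (s : ℂ) * h + (s * s : ℂ) * hs + qf A x * hseqC
    have hz : c • x + (s : ℂ) • y = 0 := by
      by_contra hne
      exact qf_ne_zero hA hne hz0
    have hsC : (s : ℂ) ≠ 0 := by exact_mod_cast hspos.ne'
    have h1 : (s : ℂ) • y = (-c) • x := by
      rw [neg_smul]; exact eq_neg_of_add_eq_zero_right hz
    have h2 := congrArg (qf A) h1
    rw [qf_smul, qf_smul, star_neg, neg_mul_neg, hc] at h2
    simp only [Complex.star_def, Complex.conj_ofReal] at h2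
    have h3 : ((1 + s * s : ℝ) : ℂ) * qf A x = 0 := by
      push_cast
      linear_combination -h2 + (s * s : ℂ) * hs
    rcases mul_eq_zero.mp h3 with h4 | h4
    · have : (1 + s * s : ℝ) = 0 := by exact_mod_cast h4
      nlinarith
    · exact ha h4

lemma cone_smul {A : Matrix (Fin n) (Fin n) ℂ} {x : Fin n → ℂ}
    (hx : x ≠ 0) {t : ℝ} (ht : 0 < t) : ∃ z, z ≠ 0 ∧ qf A z = t * qf A x := by
  refine ⟨((√t : ℝ) : ℂ) • x, ?_, ?_⟩
  · apply smul_ne_zero _ hx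
    have : √t ≠ 0 := by positivity
    exact_mod_cast this
  · rw [qf_smul]
    simp only [Complex.star_def, Complex.conj_ofReal]
    have : √t * √t = t := Real.mul_self_sqrt ht.le
    rw [← Complex.ofReal_mul, this]

/-- Toeplitz-Hausdorff. -/
lemma range_convex (A : Matrix (Fin n) (Fin n) ℂ) :
    Convex ℝ (qf A '' {x : Fin n → ℂ | star x ⬝ᵥ x = 1}) := by
  rw [convex_iff_forall_pos]
  rintro _ ⟨x, hx, rfl⟩ _ ⟨y, hy, rfl⟩ a b ha hb hab
  by_contra hp
  set p := a • qf A x + b • qf A y with hpdef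
  have hq : ∀ x : Fin n → ℂ, star x ⬝ᵥ x = 1 → qf (A - p • 1) x = qf A x - p := by
    intro x hx
    rw [qf, sub_mulVec, smul_mulVec, one_mulVec, dotProduct_sub, dotProduct_smul, hx]
    simp [qf]
  have hB : IsSectorial (A - p • 1) := by
    intro x hx h0
    have := hq x hx
    rw [qf, h0] at this
    exact hp ⟨x, hx, by linear_combination -this⟩
  have hne : ∀ x : Fin n → ℂ, star x ⬝ᵥ x = 1 → x ≠ 0 := by
    rintro x hx rfl
    simp at hx
  obtain ⟨x', hx', h1⟩ := cone_smul (A := A - p • 1) (hne x hx) ha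
  obtain ⟨y', hy', h2⟩ := cone_smul (A := A - p • 1) (hne y hy) hb
  apply antipodal hB (y := y') hx'
  rw [h1, h2, hq x hx, hq y hy]
  have habC : (a : ℂ) + b = 1 := by exact_mod_cast hab
  have hpC : p = a * qf A x + b * qf A y := by rw [hpdef]; simp
  linear_combination (-p) * habC - hpC

lemma isCompact_unit : IsCompact {x : Fin n → ℂ | star x ⬝ᵥ x = 1} := by
  apply Metric.isCompact_of_isClosed_isBounded
  · apply isClosed_eq
    · simp only [dotProduct, Pi.star_apply]; fun_prop
    · fun_prop
  · apply (Metric.isBounded_closedBall (x := (0 : Fin n → ℂ)) (r := 1)).subset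
    intro x hx
    rw [mem_closedBall_zero_iff, pi_norm_le_iff_of_nonneg zero_le_one]
    intro i
    have h : (∑ j, ‖x j‖ ^ 2 : ℝ) = 1 := by
      have h1 : star x ⬝ᵥ x = ((∑ j, ‖x j‖ ^ 2 : ℝ) : ℂ) := by
        simp only [dotProduct, Pi.star_apply]
        push_cast
        exact Finset.sum_congr rfl fun j _ => RCLike.conj_mul _
      have h2 : star x ⬝ᵥ x = 1 := hx
      rw [h1] at h2
      exact_mod_cast h2
    have h3 : ‖x i‖ ^ 2 ≤ ∑ j, ‖x j‖ ^ 2 :=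
      Finset.single_le_sum (f := fun j => ‖x j‖ ^ 2) (fun j _ => by positivity) (Finset.mem_univ i)
    rw [h] at h3
    nlinarith [norm_nonneg (x i)]

/-- A rotation of a sectorial matrix has positive definite Hermitian part. -/
lemma exists_rotation {A : Matrix (Fin n) (Fin n) ℂ} (hA : IsSectorial A) :
    ∃ θ : ℝ, ∀ x : Fin n → ℂ, x ≠ 0 → 0 < (Complex.exp (-(Complex.I * θ)) * qf A x).re := by
  have hcomp : IsCompact (qf A '' {x : Fin n → ℂ | star x ⬝ᵥ x = 1}) := by
    apply isCompact_unit.image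
    unfold qf
    simp only [dotProduct, Pi.star_apply, mulVec]; fun_prop
  have h0 : (0 : ℂ) ∉ qf A '' {x : Fin n → ℂ | star x ⬝ᵥ x = 1} := by
    rintro ⟨x, hx, hx0⟩
    exact hA x hx hx0
  obtain ⟨f, u, hf0, hf⟩ := geometric_hahn_banach_point_closed (range_convex A)
    hcomp.isClosed h0
  rw [map_zero] at hf0
  have hpos : ∀ x : Fin n → ℂ, x ≠ 0 → 0 < f (qf A x) := by
    intro x hx
    obtain ⟨r, hr, h⟩ := exists_normalize x hx
    have h1 := hf _ ⟨_, h, rfl⟩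
    rw [qf_smul] at h1
    simp only [Complex.star_def, Complex.conj_ofReal] at h1
    have h2 : (r : ℂ) * r * qf A x = (r * r) • qf A x := by simp
    rw [h2, map_smul, smul_eq_mul] at h1
    have : 0 < r * r * f (qf A x) := by linarith
    exact (mul_pos_iff_of_pos_left (by positivity)).mp this
  have hrep : ∀ z : ℂ, f z = z.re * f 1 + z.im * f Complex.I := by
    intro z
    have : z = z.re • (1 : ℂ) + z.im • Complex.I := by
      simp [Complex.re_add_im]
    conv_lhs => rw [this]
    rw [map_add, map_smul, map_smul, smul_eq_mul, smul_eq_mul]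
  set w : ℂ := ⟨f 1, f Complex.I⟩ with hw
  refine ⟨w.arg, fun x hx => ?_⟩
  have hp := hpos x hx
  rw [hrep] at hp
  have hw0 : w ≠ 0 := by
    intro h
    have e1 : f 1 = 0 := congrArg Complex.re h
    have e2 : f Complex.I = 0 := congrArg Complex.im h
    rw [e1, e2] at hp; simp at hp
  have hn : 0 < ‖w‖ := norm_pos_iff.mpr hw0
  have e1 : f 1 = ‖w‖ * Real.cos w.arg := by
    rw [Complex.norm_mul_cos_arg]
  have e2 : f Complex.I = ‖w‖ * Real.sin w.arg := by
    rw [Complex.norm_mul_sin_arg]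
  rw [e1, e2] at hp
  have e3 : Complex.exp (-(Complex.I * w.arg)) = ⟨Real.cos w.arg, -Real.sin w.arg⟩ := by
    rw [mul_comm, ← neg_mul, ← Complex.ofReal_neg]
    apply Complex.ext
    · rw [Complex.exp_ofReal_mul_I_re, Real.cos_neg]
    · rw [Complex.exp_ofReal_mul_I_im, Real.sin_neg]
  rw [e3, Complex.mul_re]
  simp only
  have : 0 < ‖w‖ * (Real.cos w.arg * (qf A x).re - -Real.sin w.arg * (qf A x).im) := by
    linarith
  exact (mul_pos_iff_of_pos_left hn).mp this

lemma herm_diag {K : Matrix (Fin n) (Fin n) ℂ} (hK : K.IsHermitian) :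
    ∃ U : Matrix (Fin n) (Fin n) ℂ, IsUnit U ∧ Uᴴ * U = 1 ∧
      Uᴴ * K * U = diagonal (fun i => (hK.eigenvalues i : ℂ)) := by
  have hU : (hK.eigenvectorUnitary : Matrix (Fin n) (Fin n) ℂ)ᴴ * hK.eigenvectorUnitary = 1 :=
    Unitary.coe_star_mul_self hK.eigenvectorUnitary
  refine ⟨hK.eigenvectorUnitary, ?_, hU, ?_⟩
  · exact IsUnit.of_mul_eq_one_right _ hU
  · have h := hK.spectral_theorem
    rw [Unitary.conjStarAlgAut_apply] at h
    have h' := congrArg (fun M => (hK.eigenvectorUnitary : Matrix (Fin n) (Fin n) ℂ)ᴴ * M *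
      (hK.eigenvectorUnitary : Matrix (Fin n) (Fin n) ℂ)) h
    refine h'.trans ?_
    have : star (hK.eigenvectorUnitary : Matrix (Fin n) (Fin n) ℂ) =
      (hK.eigenvectorUnitary : Matrix (Fin n) (Fin n) ℂ)ᴴ := rfl
    simp only [this]
    simp only [Matrix.mul_assoc, hU, Matrix.mul_one]
    rw [← Matrix.mul_assoc, hU, Matrix.one_mul]
    rfl

/-- rescaling columns of a diagonalizing congruence -/
lemma scale_diag {K W : Matrix (Fin n) (Fin n) ℂ} {d : Fin n → ℂ} (hW : IsUnit W)
    (h : Wᴴ * K * W = diagonal d) (r : Fin n → ℝ) (hr : ∀ i, 0 < r i) :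
    IsUnit (W * diagonal fun i => (r i : ℂ)) ∧
    (W * diagonal fun i => (r i : ℂ))ᴴ * K * (W * diagonal fun i => (r i : ℂ)) =
      diagonal fun i => (r i * r i : ℂ) * d i := by
  constructor
  · apply hW.mul
    rw [Matrix.isUnit_iff_isUnit_det, det_diagonal, isUnit_iff_ne_zero]
    exact Finset.prod_ne_zero_iff.mpr fun i _ => by exact_mod_cast (hr i).ne'
  · have e : (diagonal fun i => (r i : ℂ))ᴴ = diagonal fun i => (r i : ℂ) := by
      rw [diagonal_conjTranspose]; congr 1; ext i; simp
    rw [conjTranspose_mul, e]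
    calc _ = (diagonal fun i => (r i : ℂ)) * (Wᴴ * K * W) * (diagonal fun i => (r i : ℂ)) := by
          simp only [Matrix.mul_assoc]
      _ = _ := by
          rw [h, diagonal_mul_diagonal, diagonal_mul_diagonal]
          congr 1; ext i; ring

lemma exists_decomp {B : Matrix (Fin n) (Fin n) ℂ}
    (hB : ∀ x : Fin n → ℂ, x ≠ 0 → 0 < (qf B x).re) :
    ∃ (W : Matrix (Fin n) (Fin n) ℂ) (ψ : Fin n → ℝ), IsUnit W ∧
      (∀ i, |ψ i| < Real.pi / 2) ∧ Wᴴ * B * W = phaseDiag ψ := by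
  set H : Matrix (Fin n) (Fin n) ℂ := (1 / 2 : ℂ) • (B + Bᴴ) with hHdef
  set K : Matrix (Fin n) (Fin n) ℂ := (-Complex.I / 2 : ℂ) • (B - Bᴴ) with hKdef
  have hBHK : B = H + Complex.I • K := by
    rw [hHdef, hKdef, smul_smul]
    have : Complex.I * (-Complex.I / 2) = 1 / 2 := by
      linear_combination (-1 / 2 : ℂ) * Complex.I_mul_I
    rw [this]
    ext i j
    simp
    ring
  have hHh : H.IsHermitian := by
    rw [Matrix.IsHermitian, hHdef, conjTranspose_smul, conjTranspose_add,
      conjTranspose_conjTranspose, add_comm]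
    simp
  have hKh : K.IsHermitian := by
    rw [Matrix.IsHermitian, hKdef, conjTranspose_smul, conjTranspose_sub,
      conjTranspose_conjTranspose, ← neg_sub B, smul_neg, ← neg_smul]
    congr 1
    simp [Complex.ext_iff]
    norm_num
  have hconj : ∀ x, star x ⬝ᵥ Bᴴ.mulVec x = star (qf B x) := by
    intro x
    rw [qf, star_dotProduct, star_mulVec, conjTranspose_conjTranspose, ← dotProduct_mulVec]
  have hHp : H.PosDef := by
    refine PosDef.of_dotProduct_mulVec_pos hHh fun x hx => ?_
    have : star x ⬝ᵥ H.mulVec x = ((qf B x).re : ℂ) := by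
      rw [hHdef, smul_mulVec, add_mulVec, dotProduct_smul, dotProduct_add, hconj]
      change (1 / 2 : ℂ) * (qf B x + star (qf B x)) = _
      rw [Complex.star_def, Complex.add_conj]
      push_cast
      ring
    rw [this]
    exact_mod_cast hB x hx
  obtain ⟨U, hU, hUU, hUH⟩ := herm_diag hHh
  have hev : ∀ i, 0 < hHh.eigenvalues i := hHp.eigenvalues_pos
  obtain ⟨hS, hS1⟩ := scale_diag hU hUH (fun i => (√(hHh.eigenvalues i))⁻¹)
    (fun i => by have := hev i; positivity)
  set S := U * diagonal fun i => (((√(hHh.eigenvalues i))⁻¹ : ℝ) : ℂ) with hSdef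
  have hS2 : Sᴴ * H * S = 1 := by
    rw [hS1, ← diagonal_one]
    congr 1; ext i
    have h1 := hev i
    have h2 := Real.mul_self_sqrt h1.le
    have h3 : √(hHh.eigenvalues i) ≠ 0 := by positivity
    norm_cast
    generalize hHh.eigenvalues i = t at *
    field_simp
    nlinarith
  have hK' : (Sᴴ * K * S).IsHermitian := isHermitian_conjTranspose_mul_mul S hKh
  obtain ⟨V, hV, hVV, hVK⟩ := herm_diag hK'
  set μ := hK'.eigenvalues
  have hM : (S * V)ᴴ * B * (S * V) = diagonal fun i => (1 + Complex.I * μ i : ℂ) := by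
    have : (S * V)ᴴ * B * (S * V) = Vᴴ * (Sᴴ * H * S) * V +
        Complex.I • (Vᴴ * (Sᴴ * K * S) * V) := by
      rw [hBHK]
      simp only [conjTranspose_mul, Matrix.mul_add, Matrix.add_mul, Matrix.mul_smul,
        Matrix.smul_mul, Matrix.mul_assoc]
    rw [this, hS2, hVK, Matrix.mul_one, hVV, ← diagonal_one, ← diagonal_smul, diagonal_add]
    rfl
  have hne : ∀ i, (1 + Complex.I * μ i : ℂ) ≠ 0 := by
    intro i h
    have := congrArg Complex.re h
    simp at this
  obtain ⟨hW, hW1⟩ := scale_diag (hS.mul hV) hM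
    (fun i => (√‖(1 + Complex.I * μ i : ℂ)‖)⁻¹)
    (fun i => by have := norm_pos_iff.mpr (hne i); positivity)
  refine ⟨_, fun i => (1 + Complex.I * μ i : ℂ).arg, hW, ?_, ?_⟩
  · intro i
    rw [Complex.abs_arg_lt_pi_div_two_iff]
    left; simp
  · rw [hW1, phaseDiag]
    congr 1; ext i
    have h1 := norm_pos_iff.mpr (hne i)
    have h2 := Complex.norm_mul_exp_arg_mul_I (1 + Complex.I * μ i : ℂ)
    generalize (1 + Complex.I * μ i : ℂ) = z at *
    have h3 := Real.mul_self_sqrt h1.le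
    have h4 : (√‖z‖)⁻¹ * (√‖z‖)⁻¹ * ‖z‖ = 1 := by
      have : √‖z‖ ≠ 0 := by positivity
      field_simp
      nlinarith
    have h5 : (((√‖z‖)⁻¹ : ℝ) : ℂ) * (((√‖z‖)⁻¹ : ℝ) : ℂ) * (‖z‖ : ℂ) = 1 := by
      exact_mod_cast h4
    rw [mul_comm Complex.I]
    linear_combination Complex.exp (z.arg * Complex.I) * h5 -
      (((√‖z‖)⁻¹ : ℝ) : ℂ) * (((√‖z‖)⁻¹ : ℝ) : ℂ) * h2

lemma exists_sorted {A : Matrix (Fin n) (Fin n) ℂ} (hA : IsSectorial A) :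
    ∃ (φ : Fin n → ℝ), Antitone φ ∧ (∀ i j, φ i - φ j < Real.pi) ∧
      ∃ T, IsSectorialDecomp A T φ := by
  obtain ⟨θ, hθ⟩ := exists_rotation hA
  obtain ⟨W, ψ, hW, hψ, h⟩ := exists_decomp (B := Complex.exp (-(Complex.I * θ)) • A) (by
    intro x hx
    have := hθ x hx
    rwa [qf, smul_mulVec, dotProduct_smul, smul_eq_mul])
  set σ : Equiv.Perm (Fin n) := Tuple.sort (fun i => -ψ i) with hσ
  have hmono : Monotone ((fun i => -ψ i) ∘ σ) := Tuple.monotone_sort _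
  refine ⟨fun i => ψ (σ i) + θ, ?_, ?_, ?_⟩
  · intro i j hij
    have := hmono hij
    simp only [Function.comp] at this
    simp only
    linarith
  · intro i j
    have h1 := abs_lt.mp (hψ (σ i))
    have h2 := abs_lt.mp (hψ (σ j))
    simp only
    linarith
  · have hA1 : Wᴴ * A * W = diagonal fun k => Complex.exp (Complex.I * ((ψ k + θ : ℝ) : ℂ)) := by
      have h3 : Wᴴ * A * W = Complex.exp (Complex.I * θ) • phaseDiag ψ := by
        rw [← h, Matrix.mul_smul, Matrix.smul_mul, smul_smul, ← Complex.exp_add]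
        simp
      rw [h3, phaseDiag, ← diagonal_smul]
      congr 1; ext i
      simp only [Pi.smul_apply, smul_eq_mul]
      rw [← Complex.exp_add]
      congr 1; push_cast; ring
    set W' := W.submatrix id σ with hW'
    have hW'u : IsUnit W' := by
      rw [Matrix.isUnit_iff_isUnit_det] at hW ⊢
      rw [hW', det_permute']
      exact IsUnit.mul ((Equiv.Perm.sign σ).isUnit.map (Int.castRingHom ℂ)) hW
    have hA2 : W'ᴴ * A * W' = phaseDiag (fun i => ψ (σ i) + θ) := by
      have : W'ᴴ * A * W' = (Wᴴ * A * W).submatrix σ σ := by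
        rw [hW']; rfl
      rw [this, hA1, submatrix_diagonal_equiv, phaseDiag]
      rfl
    have hdet := (Matrix.isUnit_iff_isUnit_det _).mp hW'u
    refine ⟨W'⁻¹, (Matrix.isUnit_nonsing_inv_iff).mpr hW'u, ?_⟩
    rw [← hA2]
    have e1 : W'⁻¹ᴴ * W'ᴴ = 1 := by
      rw [← conjTranspose_mul, Matrix.mul_nonsing_inv _ hdet, conjTranspose_one]
    have e2 := Matrix.mul_nonsing_inv _ hdet
    calc A = (W'⁻¹ᴴ * W'ᴴ) * A * (W' * W'⁻¹) := by rw [e1, e2]; simp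
      _ = _ := by simp only [Matrix.mul_assoc]

lemma exists_canonical {A : Matrix (Fin n) (Fin n) ℂ} (hA : IsSectorial A) :
    ∃ φ, IsCanonicalPhases A φ := by
  obtain ⟨φ, h1, h2, T, hT, h3⟩ := exists_sorted hA
  have hpi := Real.pi_pos
  rcases isEmpty_or_nonempty (Fin n) with he | he
  · refine ⟨φ, h1, h2, ?_, ?_, T, hT, h3⟩
    · simp [Real.iSup_of_isEmpty, Real.iInf_of_isEmpty, hpi]
    · simp [Real.iSup_of_isEmpty, Real.iInf_of_isEmpty, hpi.le]
  · set m := ((⨆ i, φ i) + ⨅ i, φ i) / 2 with hm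
    have h2pi : 0 < 2 * Real.pi := by positivity
    set k : ℤ := toIocDiv h2pi (-Real.pi) m with hk
    have hmem := toIocMod_mem_Ioc h2pi (-Real.pi) m
    rw [← self_sub_toIocDiv_zsmul, ← hk, zsmul_eq_mul] at hmem
    set c : ℝ := -(k * (2 * Real.pi)) with hc
    have hsup : (⨆ i, (φ i + c)) = (⨆ i, φ i) + c :=
      ((OrderIso.addRight c).map_ciSup (Set.finite_range φ).bddAbove).symm
    have hinf : (⨅ i, (φ i + c)) = (⨅ i, φ i) + c :=
      ((OrderIso.addRight c).map_ciInf (Set.finite_range φ).bddBelow).symm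
    have hmid : ((⨆ i, (φ i + c)) + ⨅ i, (φ i + c)) / 2 = m + c := by
      rw [hsup, hinf, hm]; ring
    refine ⟨fun i => φ i + c, ?_, ?_, ?_, ?_, T, hT, ?_⟩
    · intro i j hij
      have := h1 hij
      simp only; linarith
    · intro i j
      have := h2 i j
      simp only; linarith
    · rw [hmid]; linarith [hmem.1]
    · rw [hmid]; linarith [hmem.2]
    · rw [h3]
      congr 2
      unfold phaseDiag
      congr 1; ext i
      rw [Complex.exp_eq_exp_iff_exists_int]
      refine ⟨k, ?_⟩
      rw [hc]; push_cast; ring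

/-- there is `R` with `rank R = prank A` and `A - R ≻ 0`. -/
theorem exists_rank_eq_prank_sub_posDef
    (A : Matrix (Fin n) (Fin n) ℂ) (hA : IsSectorial A) :
    ∃ R : Matrix (Fin n) (Fin n) ℂ, R.rank = prank A ∧ (A - R).PosDef := by
  have hex := exists_canonical hA
  have hph : IsCanonicalPhases A (phases A) := by
    rw [phases, dif_pos hex]
    exact hex.choose_spec
  obtain ⟨-, -, -, -, T, hT, hAT⟩ := hph
  set φ := phases A with hφ
  set d : Fin n → ℂ := fun k => if φ k = 0 then 0 else Complex.exp (Complex.I * (φ k : ℂ)) - 2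
    with hd
  have hdet : IsUnit T.det := (Matrix.isUnit_iff_isUnit_det _).mp hT
  have hdetH : IsUnit Tᴴ.det := by
    rw [det_conjTranspose]; exact hdet.star
  have hd0 : ∀ k, d k ≠ 0 ↔ φ k ≠ 0 := by
    intro k
    by_cases h : φ k = 0
    · simp [hd, h]
    · simp only [hd, h, if_false, ne_eq, not_false_eq_true, iff_true]
      intro h2
      have h3 : Complex.exp (Complex.I * (φ k : ℂ)) = 2 := by linear_combination h2
      have h4 := congrArg norm h3
      rw [mul_comm, Complex.norm_exp_ofReal_mul_I] at h4
      norm_num at h4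
  refine ⟨Tᴴ * diagonal d * T, ?_, ?_⟩
  · rw [rank_mul_eq_left_of_isUnit_det _ _ hdet, rank_mul_eq_right_of_isUnit_det _ _ hdetH,
      rank_diagonal, prank, Set.ncard_eq_toFinset_card', Fintype.card_subtype]
    congr 1
    ext k
    simp [hd0, ← hφ]
  · have hsub : A - Tᴴ * diagonal d * T =
        Tᴴ * diagonal (fun k => if φ k = 0 then (1 : ℂ) else 2) * T := by
      conv_lhs => rw [hAT]
      rw [← Matrix.sub_mul, ← Matrix.mul_sub, phaseDiag, diagonal_sub]
      congr 3
      ext k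
      by_cases h : φ k = 0 <;> simp [hd, h]
    rw [hsub]
    apply PosDef.conjTranspose_mul_mul_same
    · apply PosDef.diagonal
      intro k
      by_cases h : φ k = 0 <;> simp [h]
    · exact Matrix.mulVec_injective_of_isUnit hT

end LowPrank
end
end

section
/- Let n ≥ 1, let Φ₁, Φ₂: ℝⁿ → ℝ be symmetric gauge functions, let A ∈ ℂ^{n×n} be strictly positive-real (sectorial with all canonical phases in (−π/2,π/2)) with symmetric polar decomposition A = PUP, and let 0 ≤ r ≤ n. Let U = Vᴴ diag(e^{iθ₁},…,e^{iθₙ}) V be a unitary diagonalization of U with |θ₁| ≥ ⋯ ≥ |θₙ| and θ_k ∈ (−π/2,π/2), set Û_r = Vᴴ diag(e^{iθ₁},…,e^{iθ_r},1,…,1) V and Â_r = P Û_r P. Then Â_r is strictly positive-real with prank(Â_r) ≤ r, and for every strictly positive-real A_r ∈ ℂ^{n×n} with prank(A_r) ≤ r one has δ(A, Â_r) ≤ δ(A, A_r); i.e., the infimum of δ(A, A_r) over strictly positive-real A_r with prank(A_r) ≤ r is attained at Â_r. -/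
noncomputable section

open Matrix
open scoped Classical ComplexOrder

namespace LowPrank

variable {n : ℕ}

/-- Symmetric polar decomposition `A = P U P` with `P ≻ 0` Hermitian and `U` unitary sectorial. -/
def IsSymPolarDecomp (A P U : Matrix (Fin n) (Fin n) ℂ) : Prop :=
  P.PosDef ∧ U ∈ Matrix.unitaryGroup (Fin n) ℂ ∧ IsSectorial U ∧ A = P * U * P

/-- The positive-definite factor of the symmetric polar decomposition. -/
noncomputable def polarP (A : Matrix (Fin n) (Fin n) ℂ) : Matrix (Fin n) (Fin n) ℂ :=
  if h : ∃ P U, IsSymPolarDecomp A P U then h.choose else 1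

/-- The unitary factor of the symmetric polar decomposition. -/
noncomputable def polarU (A : Matrix (Fin n) (Fin n) ℂ) : Matrix (Fin n) (Fin n) ℂ :=
  if h : ∃ P U, IsSymPolarDecomp A P U then h.choose_spec.choose else 1

/-- Nondecreasingly sorted vector of the real parts of the eigenvalues of `M`
(with multiplicity, as roots of the characteristic polynomial). -/
noncomputable def eigRe (M : Matrix (Fin n) (Fin n) ℂ) : Fin n → ℝ :=
  fun k => ((M.charpoly.roots.map Complex.re).sort (· ≤ ·)).getD (k : ℕ) 0

/-- Nondecreasingly sorted vector of the arguments of the eigenvalues of `W`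
(with multiplicity, as roots of the characteristic polynomial). -/
noncomputable def eigArg (W : Matrix (Fin n) (Fin n) ℂ) : Fin n → ℝ :=
  fun k => ((W.charpoly.roots.map Complex.arg).sort (· ≤ ·)).getD (k : ℕ) 0

/-- The geodesic distance `δ(A,B) = sqrt(Φ₁(log μ)² + Φ₂(θ)²)` where `μ` are the
eigenvalues of `P_A⁻¹ P_B² P_A⁻¹` and `θ` the eigenvalue arguments of `U_Aᴴ U_B`. -/
noncomputable def geoDist (Φ₁ Φ₂ : (Fin n → ℝ) → ℝ) (A B : Matrix (Fin n) (Fin n) ℂ) : ℝ :=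
  Real.sqrt ((Φ₁ fun k => Real.log (eigRe ((polarP A)⁻¹ * polarP B ^ 2 * (polarP A)⁻¹) k)) ^ 2 +
    (Φ₂ (eigArg ((polarU A)ᴴ * polarU B))) ^ 2)

/-- Strictly positive-real: sectorial with all canonical phases in `(-π/2, π/2)`. -/
def StrictlyPositiveReal (A : Matrix (Fin n) (Fin n) ℂ) : Prop :=
  IsSectorial A ∧ ∀ k, phases A k ∈ Set.Ioo (-(Real.pi / 2)) (Real.pi / 2)

lemma quad_diag (T : Matrix (Fin n) (Fin n) ℂ) (d : Fin n → ℂ) (x : Fin n → ℂ) :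
    star x ⬝ᵥ (Tᴴ * Matrix.diagonal d * T).mulVec x
      = ∑ k, d k * ((Complex.normSq (T.mulVec x k) : ℝ) : ℂ) := by
  rw [← Matrix.mulVec_mulVec, ← Matrix.mulVec_mulVec, Matrix.dotProduct_mulVec,
    ← Matrix.star_mulVec]
  simp only [dotProduct, Matrix.mulVec_diagonal, Pi.star_apply]
  refine Finset.sum_congr rfl fun k _ => ?_
  rw [Complex.normSq_eq_conj_mul_self]
  simp only [RCLike.star_def]
  ring

lemma unitary_diag_aux (U : Matrix (Fin n) (Fin n) ℂ) (hU : U ∈ Matrix.unitaryGroup (Fin n) ℂ)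
    (h1 : IsUnit (1 + U).det) :
    ∃ Q ∈ Matrix.unitaryGroup (Fin n) ℂ, ∃ l : Fin n → ℂ, U = Qᴴ * Matrix.diagonal l * Q := by
  have hUU : Uᴴ * U = 1 := (Matrix.mem_unitaryGroup_iff').1 hU
  have hUU' : U * Uᴴ = 1 := (Matrix.mem_unitaryGroup_iff).1 hU
  set K : Matrix (Fin n) (Fin n) ℂ := Complex.I • ((1 - U) * (1 + U)⁻¹) with hK
  have hKm : K * (1 + U) = Complex.I • (1 - U) := by
    rw [hK, Matrix.smul_mul, Matrix.mul_assoc, Matrix.nonsing_inv_mul _ h1, Matrix.mul_one]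
  have h1' : IsUnit (1 + Uᴴ).det := by
    have : (1 + Uᴴ) = (1 + U)ᴴ := by simp
    rw [this, Matrix.det_conjTranspose]
    exact h1.star
  have hKH : K.IsHermitian := by
    have hi : ((1 + U)ᴴ * Kᴴ) * (1 + U) = ((1 + U)ᴴ * K) * (1 + U) := by
      rw [← Matrix.conjTranspose_mul, hKm, Matrix.mul_assoc, hKm]
      simp only [Matrix.conjTranspose_smul, Matrix.conjTranspose_sub, Matrix.conjTranspose_add,
        Matrix.conjTranspose_one, Matrix.smul_mul, Matrix.mul_smul, Matrix.sub_mul, Matrix.mul_add,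
        Matrix.add_mul, Matrix.mul_sub, Matrix.mul_one, Matrix.one_mul, hUU, RCLike.star_def,
        Complex.conj_I]
      simp only [smul_sub, smul_add, neg_smul]
      abel
    rw [Matrix.mul_assoc, Matrix.mul_assoc] at hi
    have hc : IsUnit (1 + U)ᴴ := by
      rw [Matrix.isUnit_iff_isUnit_det]; simpa using h1'
    have hi2 := hc.mul_left_cancel hi
    exact ((Matrix.isUnit_iff_isUnit_det _).2 h1).mul_right_cancel hi2
  obtain ⟨Q, hQ, d, hd⟩ : ∃ Q ∈ Matrix.unitaryGroup (Fin n) ℂ, ∃ d : Fin n → ℝ,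
      K = Qᴴ * Matrix.diagonal (fun k => (d k : ℂ)) * Q := by
    refine ⟨star (hKH.eigenvectorUnitary : Matrix (Fin n) (Fin n) ℂ), ?_, hKH.eigenvalues, ?_⟩
    · exact (star hKH.eigenvectorUnitary).2
    · conv_lhs => rw [hKH.spectral_theorem]
      rw [Unitary.conjStarAlgAut_apply]
      simp [Matrix.star_eq_conjTranspose]
      rfl
  have hQ1 : Qᴴ * Q = 1 := (Matrix.mem_unitaryGroup_iff').1 hQ
  have hQ2 : Q * Qᴴ = 1 := (Matrix.mem_unitaryGroup_iff).1 hQ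
  have hne : ∀ k, (d k : ℂ) + Complex.I ≠ 0 := by
    intro k h
    have := congrArg Complex.im h
    simp at this
  refine ⟨Q, hQ, fun k => ((d k : ℂ) + Complex.I)⁻¹ * (Complex.I - d k), ?_⟩
  have e1 : (K + Complex.I • (1 : Matrix (Fin n) (Fin n) ℂ)) * U = Complex.I • 1 - K := by
    have := hKm
    rw [Matrix.mul_add, Matrix.mul_one] at this
    rw [Matrix.add_mul, Matrix.smul_mul (a := Complex.I) (M := 1) (N := U), Matrix.one_mul, eq_sub_of_add_eq' this, smul_sub]
    abel
  have e2 : K + Complex.I • (1 : Matrix (Fin n) (Fin n) ℂ)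
      = Qᴴ * Matrix.diagonal (fun k => (d k : ℂ) + Complex.I) * Q := by
    have : Matrix.diagonal (fun k => (d k : ℂ) + Complex.I)
      = Matrix.diagonal (fun k => (d k : ℂ)) + Complex.I • (1 : Matrix (Fin n) (Fin n) ℂ) := by
      ext i j; by_cases h : i = j <;> simp [h, Matrix.diagonal]
    rw [this, Matrix.mul_add, Matrix.add_mul, ← hd, Matrix.mul_smul, Matrix.smul_mul,
      Matrix.mul_one, hQ1]
  have e3 : Complex.I • (1 : Matrix (Fin n) (Fin n) ℂ) - K
      = Qᴴ * Matrix.diagonal (fun k => Complex.I - (d k : ℂ)) * Q := by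
    have : Matrix.diagonal (fun k => Complex.I - (d k : ℂ))
      = Complex.I • (1 : Matrix (Fin n) (Fin n) ℂ) - Matrix.diagonal (fun k => (d k : ℂ)) := by
      ext i j; by_cases h : i = j <;> simp [h, Matrix.diagonal]
    rw [this, Matrix.mul_sub, Matrix.sub_mul, ← hd, Matrix.mul_smul, Matrix.smul_mul,
      Matrix.mul_one, hQ1]
  rw [e2, e3] at e1
  have e4 : (Qᴴ * Matrix.diagonal (fun k => ((d k : ℂ) + Complex.I)⁻¹) * Q) *
      (Qᴴ * Matrix.diagonal (fun k => (d k : ℂ) + Complex.I) * Q) = 1 := by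
    calc _ = Qᴴ * Matrix.diagonal (fun k => ((d k : ℂ) + Complex.I)⁻¹) * (Q * Qᴴ) *
        Matrix.diagonal (fun k => (d k : ℂ) + Complex.I) * Q := by simp only [Matrix.mul_assoc]
      _ = 1 := by
        rw [hQ2, Matrix.mul_one, Matrix.mul_assoc Qᴴ, Matrix.diagonal_mul_diagonal]
        simp [inv_mul_cancel₀ (hne _), hQ1]
  calc U = ((Qᴴ * Matrix.diagonal (fun k => ((d k : ℂ) + Complex.I)⁻¹) * Q) *
      (Qᴴ * Matrix.diagonal (fun k => (d k : ℂ) + Complex.I) * Q)) * U := by rw [e4, Matrix.one_mul]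
    _ = (Qᴴ * Matrix.diagonal (fun k => ((d k : ℂ) + Complex.I)⁻¹) * Q) *
      (Qᴴ * Matrix.diagonal (fun k => Complex.I - (d k : ℂ)) * Q) := by rw [Matrix.mul_assoc, e1]
    _ = Qᴴ * Matrix.diagonal (fun k => ((d k : ℂ) + Complex.I)⁻¹) * (Q * Qᴴ) *
        Matrix.diagonal (fun k => Complex.I - (d k : ℂ)) * Q := by simp only [Matrix.mul_assoc]
    _ = _ := by
        rw [hQ2, Matrix.mul_one, Matrix.mul_assoc Qᴴ, Matrix.diagonal_mul_diagonal]

lemma unitary_diag (U : Matrix (Fin n) (Fin n) ℂ) (hU : U ∈ Matrix.unitaryGroup (Fin n) ℂ) :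
    ∃ Q ∈ Matrix.unitaryGroup (Fin n) ℂ, ∃ l : Fin n → ℂ, U = Qᴴ * Matrix.diagonal l * Q := by
  have hUU : Uᴴ * U = 1 := (Matrix.mem_unitaryGroup_iff').1 hU
  -- a unimodular `c` such that `-c` is not an eigenvalue
  have hinj : Function.Injective (fun t : Set.Ioo (0 : ℝ) 1 => -Complex.exp (Complex.I * ((t : ℝ) : ℂ))) := by
    intro s t hst
    have h := neg_injective hst
    have h2 := congrArg Complex.arg h
    have key : ∀ t : Set.Ioo (0 : ℝ) 1, Complex.arg (Complex.exp (Complex.I * ((t : ℝ) : ℂ))) = t := by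
      intro t
      rw [mul_comm, Complex.arg_exp_mul_I, toIocMod_eq_self]
      have := t.2.1; have := t.2.2; have := Real.pi_gt_three
      constructor <;> linarith
    simp only [key] at h2
    exact Subtype.ext h2
  have hinf : (Set.range (fun t : Set.Ioo (0 : ℝ) 1 => -Complex.exp (Complex.I * ((t : ℝ) : ℂ)))).Infinite := by
    have : Infinite (Set.Ioo (0 : ℝ) 1) := (Set.Ioo_infinite one_pos).to_subtype
    exact Set.infinite_range_of_injective hinj
  obtain ⟨z, ⟨t, rfl⟩, hz⟩ := hinf.exists_notMem_finset U.charpoly.roots.toFinset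
  set c : ℂ := Complex.exp (Complex.I * ((t : ℝ) : ℂ)) with hc
  have hcc : (starRingEnd ℂ) c * c = 1 := by
    rw [← Complex.normSq_eq_conj_mul_self, Complex.normSq_eq_norm_sq, hc, mul_comm,
      Complex.norm_exp_ofReal_mul_I]
    simp
  have hc0 : c ≠ 0 := Complex.exp_ne_zero _
  have hdet : IsUnit (1 + c⁻¹ • U).det := by
    rw [isUnit_iff_ne_zero]
    intro h0
    apply hz
    rw [Multiset.mem_toFinset, Polynomial.mem_roots (Matrix.charpoly_monic U).ne_zero,
      Polynomial.IsRoot, Matrix.eval_charpoly]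
    have : (Matrix.scalar (Fin n)) (-c) - U = (-c) • (1 + c⁻¹ • U) := by
      rw [smul_add, smul_smul, neg_mul, mul_inv_cancel₀ hc0]
      simp [Matrix.scalar_apply, Matrix.smul_one_eq_diagonal, sub_eq_add_neg, neg_smul]
    rw [this, Matrix.det_smul, h0, mul_zero]
  have hcinv : c⁻¹ = (starRingEnd ℂ) c := by
    field_simp; rw [mul_comm]; exact hcc.symm
  obtain ⟨Q, hQ, l, hl⟩ := unitary_diag_aux (c⁻¹ • U) (by
    rw [Matrix.mem_unitaryGroup_iff', Matrix.star_eq_conjTranspose, Matrix.conjTranspose_smul,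
      Matrix.smul_mul, Matrix.mul_smul, hUU, smul_smul, hcinv]
    simp [mul_comm c, hcc]) hdet
  refine ⟨Q, hQ, fun k => c * l k, ?_⟩
  have : U = c • (c⁻¹ • U) := by rw [smul_smul, mul_inv_cancel₀ hc0, one_smul]
  rw [this, hl]
  have : Matrix.diagonal (fun k => c * l k) = c • Matrix.diagonal l := by
    rw [← Matrix.diagonal_smul]; rfl
  rw [this, Matrix.mul_smul, Matrix.smul_mul]

lemma roots_diag (Q : Matrix (Fin n) (Fin n) ℂ) (hQ : Q ∈ Matrix.unitaryGroup (Fin n) ℂ)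
    (l : Fin n → ℂ) :
    (Qᴴ * Matrix.diagonal l * Q).charpoly.roots = Finset.univ.val.map l := by
  have hQ2 : Q * Qᴴ = 1 := (Matrix.mem_unitaryGroup_iff).1 hQ
  rw [Matrix.charpoly_mul_comm, ← Matrix.mul_assoc, hQ2, Matrix.one_mul, Matrix.charpoly_diagonal]
  have : (∏ i, (Polynomial.X - Polynomial.C (l i)))
      = ((Finset.univ.val.map l).map fun a => Polynomial.X - Polynomial.C a).prod := by
    rw [Multiset.map_map]; rfl
  rw [this, Polynomial.roots_multiset_prod_X_sub_C]

lemma eigArg_diag (Q : Matrix (Fin n) (Fin n) ℂ) (hQ : Q ∈ Matrix.unitaryGroup (Fin n) ℂ)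
    (l : Fin n → ℂ) :
    ∃ σ : Equiv.Perm (Fin n),
      eigArg (Qᴴ * Matrix.diagonal l * Q) = (fun k => Complex.arg (l k)) ∘ σ := by
  refine ⟨Tuple.sort (fun k => Complex.arg (l k)), ?_⟩
  have hm := Tuple.monotone_sort (fun k => Complex.arg (l k))
  set σ := Tuple.sort (fun k => Complex.arg (l k))
  set f := (fun k => Complex.arg (l k)) ∘ σ with hf
  have hs : ((Finset.univ.val.map l).map Complex.arg).sort (· ≤ ·) = List.ofFn f := by
    apply List.Perm.eq_of_pairwise (le := (· ≤ ·))
    · intro a b _ _ h1 h2; exact le_antisymm h1 h2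
    · exact Multiset.pairwise_sort _ _
    · exact List.pairwise_ofFn.2 fun i j hij => hm hij.le
    · rw [← Multiset.coe_eq_coe, Multiset.sort_eq, Multiset.map_map, List.ofFn_eq_map,
        ← Multiset.map_coe]
      have : ((List.finRange n : List (Fin n)) : Multiset (Fin n)) = Finset.univ.val := rfl
      rw [this]
      have h2 : (Finset.univ : Finset (Fin n)).val.map σ = Finset.univ.val := by
        have := congrArg Finset.val (Finset.map_univ_equiv σ)
        simp
      rw [hf, ← Multiset.map_map (fun k => Complex.arg (l k)) σ, h2]
      rfl
  funext k
  simp only [eigArg]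
  rw [roots_diag Q hQ, hs]
  simp [List.getD]

lemma eigRe_one (k : Fin n) : Real.log (eigRe (1 : Matrix (Fin n) (Fin n) ℂ) k) = 0 := by
  have h : (1 : Matrix (Fin n) (Fin n) ℂ).charpoly.roots = Multiset.replicate n 1 := by
    have := roots_diag (1 : Matrix (Fin n) (Fin n) ℂ) (one_mem _) (fun _ => 1)
    simpa using this
  simp only [eigRe]
  rw [h, Multiset.map_replicate]
  set L := (Multiset.replicate n (Complex.re 1)).sort (· ≤ ·) with hL
  have hmem : ∀ a ∈ L, a = 1 := by
    intro a ha
    rw [hL, Multiset.mem_sort] at ha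
    simpa using Multiset.eq_of_mem_replicate ha
  by_cases hk : (k : ℕ) < L.length
  · rw [List.getD_eq_getElem _ _ hk, hmem _ (List.getElem_mem hk), Real.log_one]
  · rw [List.getD_eq_default _ _ (not_lt.1 hk), Real.log_zero]

lemma gauge_zero {Φ : (Fin n → ℝ) → ℝ} (h : IsSymmetricGauge Φ) : Φ 0 = 0 := by
  have := h.smul 0 0
  simpa using this

lemma gauge_nonneg {Φ : (Fin n → ℝ) → ℝ} (h : IsSymmetricGauge Φ) (x) : 0 ≤ Φ x := by
  by_cases hx : x = 0
  · rw [hx, gauge_zero h]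
  · exact (h.pos x hx).le

lemma gauge_update {Φ : (Fin n → ℝ) → ℝ} (h : IsSymmetricGauge Φ) (y : Fin n → ℝ) (k : Fin n)
    (a : ℝ) (ha : 0 ≤ a) (hay : a ≤ y k) : Φ (Function.update y k a) ≤ Φ y := by
  rcases eq_or_lt_of_le (ha.trans hay) with h0 | h0
  · have : a = y k := le_antisymm hay (h0 ▸ ha)
    rw [this, Function.update_eq_self]
  set s := a / y k with hs
  have hs1 : s ≤ 1 := (div_le_one h0).2 hay
  have hs0 : 0 ≤ s := div_nonneg ha h0.le
  set y' := Function.update y k (-(y k)) with hy'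
  have hyy : Φ y' = Φ y := by
    rw [← h.abs y', ← h.abs y]
    congr 1
    funext j
    by_cases hj : j = k
    · subst hj; simp [hy']
    · simp [hy', hj]
  have hdec : Function.update y k a = ((1 + s) / 2) • y + ((1 - s) / 2) • y' := by
    funext j
    by_cases hj : j = k
    · subst hj
      simp [hy', hs]
      field_simp
      ring
    · simp [hy', hj]
      ring
  rw [hdec]
  refine (h.subadd _ _).trans ?_
  rw [h.smul, h.smul, hyy, abs_of_nonneg (by linarith), abs_of_nonneg (by linarith)]
  apply le_of_eq; ring

lemma gauge_mono {Φ : (Fin n → ℝ) → ℝ} (h : IsSymmetricGauge Φ) (x y : Fin n → ℝ)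
    (hx : ∀ k, 0 ≤ x k) (hxy : ∀ k, x k ≤ y k) : Φ x ≤ Φ y := by
  have key : ∀ s : Finset (Fin n), Φ (fun k => if k ∈ s then x k else y k) ≤ Φ y := by
    intro s
    induction s using Finset.induction_on with
    | empty => simp
    | insert a s ha ih =>
      refine le_trans ?_ ih
      have : (fun k => if k ∈ insert a s then x k else y k)
          = Function.update (fun k => if k ∈ s then x k else y k) a (x a) := by
        funext j
        by_cases hj : j = a
        · subst hj; simp
        · simp [hj]
      rw [this]
      apply gauge_update h _ _ _ (hx a)
      simp [ha, hxy a]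
  simpa using key Finset.univ

open scoped MatrixOrder Matrix.Norms.L2Operator in
lemma posDef_sq_inj {P Q : Matrix (Fin n) (Fin n) ℂ} (hP : P.PosDef) (hQ : Q.PosDef)
    (h : P ^ 2 = Q ^ 2) : P = Q :=
  (CFC.sq_eq_sq_iff P Q hP.posSemidef.nonneg hQ.posSemidef.nonneg).1 h

lemma sectorial_ne {W : Matrix (Fin n) (Fin n) ℂ} (hW : IsSectorial W) (x : Fin n → ℂ)
    (hx : x ≠ 0) : star x ⬝ᵥ W.mulVec x ≠ 0 := by
  intro h0
  have hp : 0 < ∑ k, Complex.normSq (x k) := by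
    obtain ⟨k, hk⟩ := Function.ne_iff.1 hx
    exact Finset.sum_pos' (fun i _ => Complex.normSq_nonneg _) ⟨k, Finset.mem_univ _, Complex.normSq_pos.2 hk⟩
  set N := ∑ k, Complex.normSq (x k) with hN
  have hxx : star x ⬝ᵥ x = (N : ℂ) := by
    rw [hN]
    simp only [dotProduct, Pi.star_apply, RCLike.star_def, ← Complex.normSq_eq_conj_mul_self]
    push_cast; rfl
  set c : ℂ := (((Real.sqrt N)⁻¹ : ℝ) : ℂ) with hc
  have hcs : star c = c := by rw [hc]; exact Complex.conj_ofReal _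
  refine hW (c • x) ?_ ?_
  · rw [star_smul, smul_dotProduct, dotProduct_smul, hxx, hcs, hc, smul_eq_mul, smul_eq_mul]
    norm_cast
    have := Real.mul_self_sqrt hp.le
    have h2 : Real.sqrt N ≠ 0 := (Real.sqrt_pos.2 hp).ne'
    field_simp
    nlinarith
  · rw [star_smul, smul_dotProduct, Matrix.mulVec_smul, dotProduct_smul, h0]
    simp

lemma polar_unique {A P U Q W : Matrix (Fin n) (Fin n) ℂ}
    (h1 : IsSymPolarDecomp A P U) (h2 : IsSymPolarDecomp A Q W) : P = Q ∧ U = W := by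
  obtain ⟨hP, hU, -, hA1⟩ := h1
  obtain ⟨hQ, hW, hWs, hA2⟩ := h2
  have hU1 : Uᴴ * U = 1 := (Matrix.mem_unitaryGroup_iff').1 hU
  have hU2 : U * Uᴴ = 1 := (Matrix.mem_unitaryGroup_iff).1 hU
  have hW1 : Wᴴ * W = 1 := (Matrix.mem_unitaryGroup_iff').1 hW
  have hW2 : W * Wᴴ = 1 := (Matrix.mem_unitaryGroup_iff).1 hW
  have hPd : IsUnit P.det := (Matrix.isUnit_iff_isUnit_det _).1 hP.isUnit
  have hQd : IsUnit Q.det := (Matrix.isUnit_iff_isUnit_det _).1 hQ.isUnit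
  have hPi : P * P⁻¹ = 1 := Matrix.mul_nonsing_inv _ hPd
  have hPi' : P⁻¹ * P = 1 := Matrix.nonsing_inv_mul _ hPd
  have hQi : Q * Q⁻¹ = 1 := Matrix.mul_nonsing_inv _ hQd
  have hQi' : Q⁻¹ * Q = 1 := Matrix.nonsing_inv_mul _ hQd
  have hPH : Pᴴ = P := hP.1
  have hQH : Qᴴ = Q := hQ.1
  have hE : P * U * P = Q * W * Q := hA1.symm.trans hA2
  -- the Hermitian matrix `M = Q P⁻² Q`
  have hE2 : P * Uᴴ * P = Q * Wᴴ * Q := by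
    have := congrArg Matrix.conjTranspose hE
    simpa [Matrix.conjTranspose_mul, hPH, hQH, Matrix.mul_assoc] using this
  -- inverse of hE2
  have hinv : P⁻¹ * U * P⁻¹ = Q⁻¹ * W * Q⁻¹ := by
    have a1 : (P⁻¹ * U * P⁻¹) * (P * Uᴴ * P) = 1 := by
      calc _ = P⁻¹ * U * (P⁻¹ * P) * Uᴴ * P := by simp only [Matrix.mul_assoc]
        _ = P⁻¹ * (U * Uᴴ) * P := by rw [hPi']; simp only [Matrix.mul_assoc, Matrix.one_mul]
        _ = 1 := by rw [hU2, Matrix.mul_one, hPi']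
    have a2 : (Q * Wᴴ * Q) * (Q⁻¹ * W * Q⁻¹) = 1 := by
      calc _ = Q * Wᴴ * (Q * Q⁻¹) * W * Q⁻¹ := by simp only [Matrix.mul_assoc]
        _ = Q * (Wᴴ * W) * Q⁻¹ := by rw [hQi]; simp only [Matrix.mul_assoc, Matrix.one_mul]
        _ = 1 := by rw [hW1, Matrix.mul_one, hQi]
    rw [hE2] at a1
    exact left_inv_eq_right_inv a1 a2
  set M : Matrix (Fin n) (Fin n) ℂ := Q * P⁻¹ * P⁻¹ * Q with hM
  have hPiH : (P⁻¹)ᴴ = P⁻¹ := by rw [Matrix.conjTranspose_nonsing_inv, hPH]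
  have hMM : M * W * M = W := by
    have b1 : U = P⁻¹ * (Q * W * Q) * P⁻¹ := by
      rw [← hE]
      calc U = (P⁻¹ * P) * U * (P * P⁻¹) := by rw [hPi, hPi', Matrix.one_mul, Matrix.mul_one]
        _ = _ := by simp only [Matrix.mul_assoc]
    calc M * W * M = Q * (P⁻¹ * (P⁻¹ * (Q * W * Q) * P⁻¹) * P⁻¹) * Q := by
          rw [hM]; simp only [Matrix.mul_assoc]
      _ = Q * (P⁻¹ * U * P⁻¹) * Q := by rw [← b1]
      _ = (Q * Q⁻¹) * W * (Q⁻¹ * Q) := by rw [hinv]; simp only [Matrix.mul_assoc]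
      _ = W := by rw [hQi, hQi', Matrix.one_mul, Matrix.mul_one]
  have hMps : M.PosSemidef := by
    have : M = (P⁻¹ * Q)ᴴ * (P⁻¹ * Q) := by
      rw [Matrix.conjTranspose_mul, hPiH, hQH, hM]; simp only [Matrix.mul_assoc]
    rw [this]; exact Matrix.posSemidef_conjTranspose_mul_self _
  have hMH : M.IsHermitian := hMps.1
  have hev : ∀ k, hMH.eigenvalues k = 1 := by
    intro k
    set v : Fin n → ℂ := ⇑(hMH.eigenvectorBasis k) with hv
    have hmv : M.mulVec v = (hMH.eigenvalues k : ℂ) • v := hMH.mulVec_eigenvectorBasis k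
    have hv0 : v ≠ 0 := by
      intro h0
      have := hMH.eigenvectorBasis.orthonormal.ne_zero k
      apply this
      ext i
      exact congrFun h0 i
    have hne := sectorial_ne hWs v hv0
    set m := hMH.eigenvalues k with hm
    have hq : star v ⬝ᵥ W.mulVec v = (m : ℂ) * (m : ℂ) * (star v ⬝ᵥ W.mulVec v) := by
      conv_lhs => rw [← hMM]
      rw [← Matrix.mulVec_mulVec, ← Matrix.mulVec_mulVec, hmv, Matrix.dotProduct_mulVec]
      have : star v ᵥ* M = (m : ℂ) • star v := by
        have := congrArg star hmv
        rw [Matrix.star_mulVec, hMH.eq] at this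
        rw [this, star_smul]
        congr 1
        exact Complex.conj_ofReal _
      rw [this, Matrix.mulVec_smul, smul_dotProduct, dotProduct_smul]
      simp [mul_assoc]
    have hm2 : (m : ℂ) * m = 1 := by
      have : ((m : ℂ) * m - 1) * (star v ⬝ᵥ W.mulVec v) = 0 := by
        rw [sub_mul, ← hq]; ring
      rcases mul_eq_zero.1 this with h | h
      · exact sub_eq_zero.1 h
      · exact absurd h hne
    have hm3 : m * m = 1 := by exact_mod_cast hm2
    have hm0 : 0 ≤ m := hMps.eigenvalues_nonneg k
    nlinarith
  have hM1 : M = 1 := by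
    rw [hMH.spectral_theorem]
    have : (RCLike.ofReal ∘ hMH.eigenvalues : Fin n → ℂ) = fun _ => 1 := by
      funext k; simp [hev k]
    rw [this]; simp
  have hPQ2 : P ^ 2 = Q ^ 2 := by
    have : Q * P⁻¹ * P⁻¹ = Q⁻¹ := by
      calc Q * P⁻¹ * P⁻¹ = M * Q⁻¹ := by rw [hM, Matrix.mul_assoc _ Q, hQi, Matrix.mul_one]
        _ = Q⁻¹ := by rw [hM1, Matrix.one_mul]
    calc P ^ 2 = Q * Q⁻¹ * P * P := by rw [hQi, Matrix.one_mul, pow_two]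
      _ = Q * (Q * P⁻¹ * (P⁻¹ * P) * P) := by rw [← this]; simp only [Matrix.mul_assoc]
      _ = Q * (Q * (P⁻¹ * P)) := by rw [hPi', Matrix.mul_one, Matrix.mul_assoc, hPi']
      _ = Q ^ 2 := by rw [hPi', Matrix.mul_one, pow_two]
  have hPQ : P = Q := by
    exact posDef_sq_inj hP hQ hPQ2
  refine ⟨hPQ, ?_⟩
  subst hPQ
  have := hP.isUnit.mul_right_cancel hE
  exact hP.isUnit.mul_left_cancel this

lemma polar_eq {A P U : Matrix (Fin n) (Fin n) ℂ} (h : IsSymPolarDecomp A P U) :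
    polarP A = P ∧ polarU A = U := by
  have hex : ∃ P U, IsSymPolarDecomp A P U := ⟨P, U, h⟩
  have hs := hex.choose_spec.choose_spec
  have := polar_unique hs h
  simp only [polarP, polarU, dif_pos hex]
  exact this

lemma canon_exists (hn : 1 ≤ n) (T : Matrix (Fin n) (Fin n) ℂ) (hT : IsUnit T) (φ : Fin n → ℝ)
    (α : ℝ) (h : ∀ k, φ k ∈ Set.Ioo (α - Real.pi / 2) (α + Real.pi / 2)) :
    ∃ ψ, IsCanonicalPhases (Tᴴ * phaseDiag φ * T) ψ := by
  have : Nonempty (Fin n) := ⟨⟨0, hn⟩⟩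
  set τ := Tuple.sort (fun k => - φ k) with hτ
  have hmono := Tuple.monotone_sort (fun k => - φ k)
  rw [← hτ] at hmono
  set m := ((⨆ i, φ (τ i)) + ⨅ i, φ (τ i)) / 2 with hm
  obtain ⟨z, hz, -⟩ := existsUnique_add_zsmul_mem_Ioc Real.two_pi_pos m (-Real.pi)
  set c : ℝ := z • (2 * Real.pi) with hc
  have hsup : (⨆ i, (φ (τ i) + c)) = (⨆ i, φ (τ i)) + c :=
    (ciSup_add (Set.finite_range _).bddAbove c).symm
  have hinf : (⨅ i, (φ (τ i) + c)) = (⨅ i, φ (τ i)) + c :=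
    (ciInf_add (Set.finite_range _).bddBelow c).symm
  have hmid : ((⨆ i, (φ (τ i) + c)) + ⨅ i, (φ (τ i) + c)) / 2 = m + c := by
    rw [hsup, hinf, hm]; ring
  refine ⟨fun k => φ (τ k) + c, ?_, ?_, ?_, ?_, T.submatrix τ (Equiv.refl _), ?_, ?_⟩
  · intro i j hij
    have := hmono hij
    simp only [Function.comp] at this
    show φ (τ j) + c ≤ φ (τ i) + c
    linarith
  · intro i j
    have h1 := (h (τ i)).2
    have h2 := (h (τ j)).1
    linarith
  · rw [hmid]; exact hz.1
  · rw [hmid]; have := hz.2; linarith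
  · rw [Matrix.isUnit_submatrix_equiv]; exact hT
  · have he : phaseDiag (fun k => φ (τ k) + c) = (phaseDiag φ).submatrix τ τ := by
      simp only [phaseDiag, Matrix.submatrix_diagonal_equiv]
      congr 1
      funext k
      simp only [Function.comp]
      rw [hc]
      push_cast
      rw [mul_add, Complex.exp_add]
      have : Complex.exp (Complex.I * (z • (2 * (Real.pi : ℂ)))) = 1 := by
        rw [zsmul_eq_mul, Complex.exp_eq_one_iff]
        exact ⟨z, by ring⟩
      rw [this, mul_one]
    rw [he, Matrix.conjTranspose_submatrix, Matrix.submatrix_mul_equiv,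
      Matrix.submatrix_mul_equiv]
    simp

lemma phases_spec {M : Matrix (Fin n) (Fin n) ℂ} (hM : ∃ φ, IsCanonicalPhases M φ) :
    IsCanonicalPhases M (phases M) := by
  simp only [phases, dif_pos hM]
  exact hM.choose_spec

def RePos (M : Matrix (Fin n) (Fin n) ℂ) : Prop :=
  ∀ x : Fin n → ℂ, x ≠ 0 → 0 < (star x ⬝ᵥ M.mulVec x).re

lemma exp_I_re (t : ℝ) : (Complex.exp (Complex.I * (t : ℂ))).re = Real.cos t := by
  rw [mul_comm, Complex.exp_ofReal_mul_I_re]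

lemma rePos_decomp {T : Matrix (Fin n) (Fin n) ℂ} (hT : IsUnit T) {d : Fin n → ℂ}
    (h : ∀ k, 0 < (d k).re) : RePos (Tᴴ * Matrix.diagonal d * T) := by
  intro x hx
  rw [quad_diag, Complex.re_sum]
  have hTx : T.mulVec x ≠ 0 := by
    intro h0
    apply hx
    have := Matrix.mulVec_injective_of_isUnit hT
    exact this (by rw [h0, Matrix.mulVec_zero])
  obtain ⟨k, hk⟩ := Function.ne_iff.1 hTx
  simp only [Complex.re_mul_ofReal]
  exact Finset.sum_pos' (fun i _ => mul_nonneg (h i).le (Complex.normSq_nonneg _))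
    ⟨k, Finset.mem_univ _, mul_pos (h k) (Complex.normSq_pos.2 hk)⟩

lemma rePos_sectorial {M : Matrix (Fin n) (Fin n) ℂ} (h : RePos M) : IsSectorial M := by
  intro x hx h0
  have hx0 : x ≠ 0 := by rintro rfl; simp at hx
  have := h x hx0
  rw [h0] at this
  simp at this

lemma rePos_diag {T : Matrix (Fin n) (Fin n) ℂ} (hT : IsUnit T) {d : Fin n → ℂ}
    (h : RePos (Tᴴ * Matrix.diagonal d * T)) (k : Fin n) : 0 < (d k).re := by
  have hd := (Matrix.isUnit_iff_isUnit_det _).1 hT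
  have hx : T.mulVec (T⁻¹.mulVec (Pi.single k 1)) = Pi.single k 1 := by
    rw [Matrix.mulVec_mulVec, Matrix.mul_nonsing_inv _ hd, Matrix.one_mulVec]
  have := h (T⁻¹.mulVec (Pi.single k 1)) (by
    intro h0
    rw [h0, Matrix.mulVec_zero] at hx
    have := congrFun hx k
    simp at this)
  rw [quad_diag, hx] at this
  rw [Finset.sum_eq_single k] at this
  · simpa using this
  · intro b _ hb; simp [hb]
  · simp

lemma spr_of_rePos (hn : 1 ≤ n) {M : Matrix (Fin n) (Fin n) ℂ} (hM : ∃ φ, IsCanonicalPhases M φ)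
    (h : RePos M) : StrictlyPositiveReal M := by
  refine ⟨rePos_sectorial h, ?_⟩
  have : Nonempty (Fin n) := ⟨⟨0, hn⟩⟩
  obtain ⟨hanti, hspread, hm1, hm2, T, hT, hdec⟩ := phases_spec hM
  set φ := phases M
  have hcos : ∀ k, 0 < Real.cos (φ k) := by
    intro k
    rw [hdec] at h
    have := rePos_diag hT h k
    rwa [exp_I_re] at this
  have hpi := Real.pi_pos
  -- midpoint
  set m := ((⨆ i, φ i) + ⨅ i, φ i) / 2 with hm
  have hle : ∀ k, φ k ≤ ⨆ i, φ i := fun k => le_ciSup (Set.finite_range φ).bddAbove k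
  have hge : ∀ k, ⨅ i, φ i ≤ φ k := fun k => ciInf_le (Set.finite_range φ).bddBelow k
  obtain ⟨i0, hi0⟩ := exists_eq_ciSup_of_finite (f := φ)
  obtain ⟨j0, hj0⟩ := exists_eq_ciInf_of_finite (f := φ)
  have hs := hspread i0 j0
  -- every phase is within pi/2 of the midpoint
  have hin : ∀ k, m - Real.pi / 2 < φ k ∧ φ k < m + Real.pi / 2 := by
    intro k
    have := hle k; have := hge k
    rw [hm]; rw [hi0, hj0] at hs
    constructor <;> linarith
  have hno : ∀ k, ¬ (Real.pi / 2 ≤ φ k ∧ φ k ≤ Real.pi + Real.pi / 2) := fun k hk =>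
    (hcos k).not_ge (Real.cos_nonpos_of_pi_div_two_le_of_le hk.1 hk.2)
  have hno2 : ∀ k, ¬ (Real.pi / 2 ≤ - φ k ∧ - φ k ≤ Real.pi + Real.pi / 2) := fun k hk => by
    have := Real.cos_nonpos_of_pi_div_two_le_of_le hk.1 hk.2
    rw [Real.cos_neg] at this
    exact (hcos k).not_ge this
  have hup : ∀ k, φ k < Real.pi / 2 ∨ - φ k < -(Real.pi + Real.pi / 2) := by
    intro k
    by_contra! hh
    exact hno k ⟨hh.1, by linarith [hh.2]⟩
  -- bound via extreme entries
  have hub : ∀ k, φ k < Real.pi / 2 := fun k => by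
    by_contra! hh
    have := (hin k).2
    exact hno k ⟨hh, by linarith⟩
  have hlb : ∀ k, -(Real.pi / 2) < φ k := fun k => by
    by_contra! hh
    have := (hin k).1
    exact hno2 k ⟨by linarith, by linarith⟩
  exact fun k => ⟨hlb k, hub k⟩

lemma prank_eq {M : Matrix (Fin n) (Fin n) ℂ} (hM : ∃ φ, IsCanonicalPhases M φ)
    (h : ∀ k, phases M k ∈ Set.Ioo (-(Real.pi / 2)) (Real.pi / 2)) :
    prank M = (M - Mᴴ).rank := by
  obtain ⟨-, -, -, -, T, hT, hdec⟩ := phases_spec hM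
  set φ := phases M with hφ
  have hd := (Matrix.isUnit_iff_isUnit_det _).1 hT
  have hd' : IsUnit (Tᴴ).det := by rw [Matrix.det_conjTranspose]; exact hd.star
  have e : M - Mᴴ = Tᴴ * (Matrix.diagonal fun k => (2 * (Real.sin (φ k) : ℂ) * Complex.I)) * T := by
    have e1 : Mᴴ = Tᴴ * (phaseDiag φ)ᴴ * T := by
      rw [hdec]; simp [Matrix.conjTranspose_mul, Matrix.mul_assoc]
    have e2 : phaseDiag φ - (phaseDiag φ)ᴴ
        = Matrix.diagonal fun k => (2 * (Real.sin (φ k) : ℂ) * Complex.I) := by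
      rw [phaseDiag, Matrix.diagonal_conjTranspose, Matrix.diagonal_sub]
      congr 1
      funext k
      apply Complex.ext
      · simp
      · have : (Complex.exp (Complex.I * (φ k : ℂ))).im = Real.sin (φ k) := by
          rw [mul_comm, Complex.exp_ofReal_mul_I_im]
        simp only [Pi.star_apply, RCLike.star_def, Complex.sub_im, Complex.conj_im, this]
        simp only [Complex.mul_im, Complex.mul_re, Complex.I_re, Complex.I_im, Complex.ofReal_re,
          Complex.ofReal_im, Complex.re_ofNat, Complex.im_ofNat]
        ring
    rw [e1, ← e2, Matrix.mul_sub, Matrix.sub_mul, ← hdec]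
  rw [e, Matrix.rank_mul_eq_left_of_isUnit_det _ _ hd, Matrix.rank_mul_eq_right_of_isUnit_det _ _ hd',
    Matrix.rank_diagonal]
  rw [prank, ← Nat.card_coe_set_eq, ← Nat.card_eq_fintype_card]
  apply Nat.card_congr
  refine Equiv.subtypeEquivRight fun k => ?_
  rw [← hφ]
  simp only [Set.mem_ofPred_eq, ne_eq, mul_eq_zero, Complex.I_ne_zero, or_false,
    OfNat.ofNat_ne_zero, false_or, Complex.ofReal_eq_zero]
  have := h k
  rw [Real.sin_eq_zero_iff_of_lt_of_lt (by linarith [this.1, Real.pi_pos])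
    (by linarith [this.2, Real.pi_pos])]

lemma isUnit_of_unitary {Q : Matrix (Fin n) (Fin n) ℂ} (hQ : Q ∈ Matrix.unitaryGroup (Fin n) ℂ) :
    IsUnit Q :=
  ⟨⟨Q, Qᴴ, (Matrix.mem_unitaryGroup_iff).1 hQ, (Matrix.mem_unitaryGroup_iff').1 hQ⟩, rfl⟩

lemma norm_diag_unitary {W Q : Matrix (Fin n) (Fin n) ℂ} (hW : W ∈ Matrix.unitaryGroup (Fin n) ℂ)
    (hQ : Q ∈ Matrix.unitaryGroup (Fin n) ℂ) (l : Fin n → ℂ)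
    (h : W = Qᴴ * Matrix.diagonal l * Q) (k : Fin n) : ‖l k‖ = 1 := by
  have hQ1 : Qᴴ * Q = 1 := (Matrix.mem_unitaryGroup_iff').1 hQ
  have hQ2 : Q * Qᴴ = 1 := (Matrix.mem_unitaryGroup_iff).1 hQ
  have hW1 : Wᴴ * W = 1 := (Matrix.mem_unitaryGroup_iff').1 hW
  have hD : Q * W * Qᴴ = Matrix.diagonal l := by
    rw [h]
    calc _ = (Q * Qᴴ) * Matrix.diagonal l * (Q * Qᴴ) := by simp only [Matrix.mul_assoc]
      _ = _ := by rw [hQ2, Matrix.one_mul, Matrix.mul_one]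
  have hDD : (Matrix.diagonal l)ᴴ * Matrix.diagonal l = 1 := by
    rw [← hD]
    calc _ = Q * (Wᴴ * ((Qᴴ * Q) * W)) * Qᴴ := by
          simp only [Matrix.conjTranspose_mul, Matrix.conjTranspose_conjTranspose, Matrix.mul_assoc]
      _ = 1 := by rw [hQ1, Matrix.one_mul, hW1, Matrix.mul_one, hQ2]
  rw [Matrix.diagonal_conjTranspose, Matrix.diagonal_mul_diagonal] at hDD
  have := congrFun (congrFun hDD k) k
  simp only [Matrix.diagonal_apply_eq, Matrix.one_apply_eq, Pi.star_apply, RCLike.star_def] at this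
  rw [← Complex.normSq_eq_conj_mul_self, Complex.normSq_eq_norm_sq] at this
  have h2 : ‖l k‖ ^ 2 = 1 := by exact_mod_cast this
  have := norm_nonneg (l k)
  nlinarith

lemma sectorial_sector (hn : 1 ≤ n) {Q : Matrix (Fin n) (Fin n) ℂ}
    (hQ : Q ∈ Matrix.unitaryGroup (Fin n) ℂ) (l : Fin n → ℂ) (hl : ∀ k, ‖l k‖ = 1)
    (hs : IsSectorial (Qᴴ * Matrix.diagonal l * Q)) :
    ∃ (α : ℝ) (φ : Fin n → ℝ), (∀ k, φ k ∈ Set.Ioo (α - Real.pi / 2) (α + Real.pi / 2)) ∧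
      ∀ k, l k = Complex.exp (Complex.I * (φ k : ℂ)) := by
  have hQ2 : Q * Qᴴ = 1 := (Matrix.mem_unitaryGroup_iff).1 hQ
  set L : (Fin n → ℝ) →ₗ[ℝ] ℂ := Fintype.linearCombination ℝ l with hL
  set S : Set ℂ := Set.image L (stdSimplex ℝ (Fin n)) with hS
  have hconv : Convex ℝ S := (convex_stdSimplex ℝ (Fin n)).linear_image L
  have hcomp : IsCompact S := (isCompact_stdSimplex ℝ (Fin n)).image L.continuous_of_finiteDimensional
  have h0 : (0 : ℂ) ∉ S := by
    rintro ⟨w, hw, hw0⟩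
    rw [hL, Fintype.linearCombination_apply] at hw0
    set y : Fin n → ℂ := fun k => ((Real.sqrt (w k) : ℝ) : ℂ) with hy
    have hQx : Q.mulVec (Qᴴ.mulVec y) = y := by
      rw [Matrix.mulVec_mulVec, hQ2, Matrix.one_mulVec]
    refine sectorial_ne hs (Qᴴ.mulVec y) ?_ ?_
    · intro hz
      rw [hz, Matrix.mulVec_zero] at hQx
      have hw1 := hw.2
      have : ∀ k, w k = 0 := by
        intro k
        have := congrFun hQx k
        simp only [hy, Pi.zero_apply] at this
        have h3 : Real.sqrt (w k) = 0 := by exact_mod_cast this.symm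
        exact (Real.sqrt_eq_zero (hw.1 k)).1 h3
      simp [this] at hw1
    · rw [quad_diag, hQx, ← hw0]
      refine Finset.sum_congr rfl fun k _ => ?_
      simp only [hy, Complex.normSq_ofReal, Real.mul_self_sqrt (hw.1 k), Complex.real_smul]
      ring
  obtain ⟨f, u, hf0, hfu⟩ := geometric_hahn_banach_point_closed hconv hcomp.isClosed h0
  have hfl : ∀ k, 0 < f (l k) := by
    intro k
    have := hfu (l k) ⟨Pi.single k 1, single_mem_stdSimplex ℝ k, by
      rw [hL, Fintype.linearCombination_apply_single, one_smul]⟩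
    rw [map_zero] at hf0
    linarith
  set w : ℂ := ⟨f 1, f Complex.I⟩ with hw
  have hfz : ∀ z : ℂ, f z = (z * (starRingEnd ℂ) w).re := by
    intro z
    have : z = z.re • (1 : ℂ) + z.im • Complex.I := by
      apply Complex.ext <;> simp
    conv_lhs => rw [this]
    rw [map_add, map_smul, map_smul, hw]
    simp [Complex.mul_re]
  refine ⟨Complex.arg w, fun k => Complex.arg w + Complex.arg (l k * (starRingEnd ℂ) w), ?_, ?_⟩
  · intro k
    have : |Complex.arg (l k * (starRingEnd ℂ) w)| < Real.pi / 2 := by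
      rw [Complex.abs_arg_lt_pi_div_two_iff]
      left
      rw [← hfz]; exact hfl k
    rw [abs_lt] at this
    constructor <;> linarith [this.1, this.2]
  · intro k
    have hw0 : w ≠ 0 := by
      intro h
      have := hfl k
      rw [hfz, h] at this
      simp at this
    have h1 := Complex.norm_mul_exp_arg_mul_I w
    have h2 := Complex.norm_mul_exp_arg_mul_I (l k * (starRingEnd ℂ) w)
    rw [norm_mul, hl k, one_mul, Complex.norm_conj] at h2
    have hn0 : (‖w‖ : ℂ) ≠ 0 := by simpa using hw0
    push_cast
    rw [mul_add, Complex.exp_add, mul_comm Complex.I, mul_comm Complex.I]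
    have h3 : ((‖w‖ : ℂ) * ‖w‖) * (Complex.exp (Complex.arg w * Complex.I) *
        Complex.exp (Complex.arg (l k * (starRingEnd ℂ) w) * Complex.I))
        = ((‖w‖ : ℂ) * ‖w‖) * l k := by
      calc _ = (‖w‖ * Complex.exp (Complex.arg w * Complex.I)) *
          (‖w‖ * Complex.exp (Complex.arg (l k * (starRingEnd ℂ) w) * Complex.I)) := by ring
        _ = l k * (w * (starRingEnd ℂ) w) := by rw [h1, h2]; ring
        _ = _ := by rw [Complex.mul_conj, Complex.normSq_eq_norm_sq]; push_cast; ring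
    exact (mul_left_cancel₀ (mul_ne_zero hn0 hn0) h3).symm

lemma three_rank (M₁ M₂ M₃ : Matrix (Fin n) (Fin n) ℂ) (h : M₁.rank + M₂.rank + M₃.rank < n) :
    ∃ x : Fin n → ℂ, x ≠ 0 ∧ M₁.mulVec x = 0 ∧ M₂.mulVec x = 0 ∧ M₃.mulVec x = 0 := by
  have hk : ∀ M : Matrix (Fin n) (Fin n) ℂ,
      M.rank + Module.finrank ℂ (LinearMap.ker M.mulVecLin) = n := by
    intro M
    have := LinearMap.finrank_range_add_finrank_ker M.mulVecLin
    simpa [Matrix.rank] using this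
  have h1 := hk M₁
  have h2 := hk M₂
  have h3 := hk M₃
  set K₁ := LinearMap.ker M₁.mulVecLin
  set K₂ := LinearMap.ker M₂.mulVecLin
  set K₃ := LinearMap.ker M₃.mulVecLin
  have a1 := Submodule.finrank_sup_add_finrank_inf_eq K₁ K₂
  have a2 := Submodule.finrank_sup_add_finrank_inf_eq (K₁ ⊓ K₂) K₃
  have b1 := Submodule.finrank_le (K₁ ⊔ K₂)
  have b2 := Submodule.finrank_le ((K₁ ⊓ K₂) ⊔ K₃)
  simp only [Module.finrank_fintype_fun_eq_card, Fintype.card_fin] at b1 b2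
  have hpos : K₁ ⊓ K₂ ⊓ K₃ ≠ ⊥ := by
    intro hb
    rw [hb, finrank_bot] at a2
    omega
  obtain ⟨x, hx, hx0⟩ := Submodule.exists_mem_ne_zero_of_ne_bot hpos
  exact ⟨x, hx0, hx.1.1, hx.1.2, hx.2⟩

lemma unitary_normSq {Q : Matrix (Fin n) (Fin n) ℂ} (hQ : Q ∈ Matrix.unitaryGroup (Fin n) ℂ)
    (x : Fin n → ℂ) : ∑ k, Complex.normSq (Q.mulVec x k) = (star x ⬝ᵥ x).re := by
  have hQ1 : Qᴴ * Q = 1 := (Matrix.mem_unitaryGroup_iff').1 hQ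
  have := quad_diag Q (fun _ => 1) x
  rw [Matrix.diagonal_one, Matrix.mul_one, hQ1, Matrix.one_mulVec] at this
  rw [this]
  simp

lemma count_bound {V Q UB : Matrix (Fin n) (Fin n) ℂ} (θ : Fin n → ℝ) (r : ℕ)
    (hV : V ∈ Matrix.unitaryGroup (Fin n) ℂ)
    (hQ : Q ∈ Matrix.unitaryGroup (Fin n) ℂ)
    (hUB : UB ∈ Matrix.unitaryGroup (Fin n) ℂ)
    (hθsort : ∀ i j : Fin n, i ≤ j → |θ j| ≤ |θ i|)
    (hθrange : ∀ k, θ k ∈ Set.Ioo (-(Real.pi / 2)) (Real.pi / 2))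
    (hrank : (UB - UBᴴ).rank ≤ r) (hpos : RePos UB)
    (l : Fin n → ℂ) (hl : ∀ k, ‖l k‖ = 1)
    (hW : (Vᴴ * phaseDiag θ * V)ᴴ * UB = Qᴴ * Matrix.diagonal l * Q)
    (τ : Equiv.Perm (Fin n))
    (hτ : Antitone ((fun k => |Complex.arg (l k)|) ∘ τ))
    (i j : Fin n) (hij : (j : ℕ) = i + r) : |θ j| ≤ |Complex.arg (l (τ i))| := by
  by_contra! hlt
  have hUB1 : UBᴴ * UB = 1 := (Matrix.mem_unitaryGroup_iff').1 hUB
  have hUB2 : UB * UBᴴ = 1 := (Matrix.mem_unitaryGroup_iff).1 hUB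
  set D₁ : Fin n → ℂ := fun k => if τ.symm k < i then 1 else 0 with hD₁
  set D₃ : Fin n → ℂ := fun k => if k ≤ j then 0 else 1 with hD₃
  have r1 : (Matrix.diagonal D₁ * Q).rank ≤ i := by
    refine (Matrix.rank_mul_le_left _ _).trans ?_
    rw [Matrix.rank_diagonal]
    have hlt' : ∀ k : {k // D₁ k ≠ 0}, τ.symm k.1 < i := by
      rintro ⟨k, hk⟩
      by_contra hcon
      exact hk (by simp [hD₁, hcon])
    have := Fintype.card_le_of_injective
      (fun k : {k // D₁ k ≠ 0} => (⟨τ.symm k.1, hlt' k⟩ : Fin i)) (by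
        intro a b hab
        simp only [Fin.mk.injEq] at hab
        exact Subtype.ext (τ.symm.injective (Fin.ext hab)))
    simpa using this
  have r3 : (Matrix.diagonal D₃ * V).rank ≤ n - (j + 1) := by
    refine (Matrix.rank_mul_le_left _ _).trans ?_
    rw [Matrix.rank_diagonal]
    have hlt' : ∀ k : {k // D₃ k ≠ 0}, j < k.1 := by
      rintro ⟨k, hk⟩
      by_contra hcon
      exact hk (by simp [hD₃, not_lt.1 hcon])
    have := Fintype.card_le_of_injective
      (fun k : {k // D₃ k ≠ 0} => (⟨(k.1 : ℕ) - (j + 1), by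
        have := hlt' k; have := k.1.2; have := Fin.lt_def.1 (hlt' k); omega⟩ : Fin (n - (j + 1)))) (by
        intro a b hab
        simp only [Fin.mk.injEq] at hab
        have ha := Fin.lt_def.1 (hlt' a)
        have hb := Fin.lt_def.1 (hlt' b)
        exact Subtype.ext (Fin.ext (by omega)))
    simpa using this
  obtain ⟨x, hx0, hx1, hx2, hx3⟩ := three_rank (Matrix.diagonal D₁ * Q) (UB - UBᴴ)
    (Matrix.diagonal D₃ * V) (by have := j.2; omega)
  -- `UB x = x`
  have hfix : UB.mulVec x = x := by
    have h1 : UB.mulVec x = UBᴴ.mulVec x := by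
      rw [Matrix.sub_mulVec] at hx2
      exact sub_eq_zero.1 hx2
    have h2 : UB.mulVec (UB.mulVec x) = x := by
      conv_lhs => rw [h1]
      rw [Matrix.mulVec_mulVec, hUB2, Matrix.one_mulVec]
    by_contra hne
    set y := UB.mulVec x - x with hy
    have hy0 : y ≠ 0 := sub_ne_zero.2 hne
    have hUy : UB.mulVec y = -y := by
      rw [hy, Matrix.mulVec_sub, h2]; abel
    have hp := hpos y hy0
    rw [hUy, dotProduct_neg, Complex.neg_re] at hp
    have hnn : 0 ≤ (star y ⬝ᵥ y).re := by
      rw [← unitary_normSq (one_mem _) y]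
      exact Finset.sum_nonneg fun _ _ => Complex.normSq_nonneg _
    linarith
  have hVx : ∀ k, j < k → V.mulVec x k = 0 := by
    intro k hk
    have := congrFun hx3 k
    rw [← Matrix.mulVec_mulVec, Matrix.mulVec_diagonal] at this
    simpa [hD₃, not_le.2 hk] using this
  have hQx : ∀ k, τ.symm k < i → Q.mulVec x k = 0 := by
    intro k hk
    have := congrFun hx1 k
    rw [← Matrix.mulVec_mulVec, Matrix.mulVec_diagonal] at this
    simpa [hD₁, hk] using this
  have hUH : (Vᴴ * phaseDiag θ * V)ᴴ
      = Vᴴ * Matrix.diagonal (fun k => Complex.exp (Complex.I * ((-θ k : ℝ) : ℂ))) * V := by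
    rw [Matrix.conjTranspose_mul, Matrix.conjTranspose_mul, Matrix.conjTranspose_conjTranspose,
      phaseDiag, Matrix.diagonal_conjTranspose, Matrix.mul_assoc]
    congr 3
    funext k
    simp [← Complex.exp_conj]
  have hre : (star x ⬝ᵥ (Qᴴ * Matrix.diagonal l * Q).mulVec x).re
      = (star x ⬝ᵥ (Vᴴ * Matrix.diagonal (fun k => Complex.exp (Complex.I * ((-θ k : ℝ) : ℂ))) * V).mulVec x).re := by
    rw [← hW, ← Matrix.mulVec_mulVec, hfix, hUH]
  rw [quad_diag, quad_diag, Complex.re_sum, Complex.re_sum] at hre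
  simp only [Complex.re_mul_ofReal, exp_I_re, Real.cos_neg] at hre
  have hpi := Real.pi_pos
  have up : ∑ k, Real.cos (θ k) * Complex.normSq (V.mulVec x k)
      ≤ Real.cos |θ j| * (star x ⬝ᵥ x).re := by
    rw [← unitary_normSq hV x, Finset.mul_sum]
    refine Finset.sum_le_sum fun k _ => ?_
    by_cases hk : j < k
    · rw [hVx k hk]; simp
    · refine mul_le_mul_of_nonneg_right ?_ (Complex.normSq_nonneg _)
      rw [← Real.cos_abs (θ k)]
      refine Real.cos_le_cos_of_nonneg_of_le_pi (abs_nonneg _) ?_ (hθsort k j (not_lt.1 hk))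
      rw [abs_le]
      have := hθrange k
      constructor <;> linarith [this.1, this.2]
  have hrel : ∀ k, (l k).re = Real.cos |Complex.arg (l k)| := by
    intro k
    rw [Real.cos_abs, Complex.cos_arg (by rw [← norm_pos_iff, hl k]; exact one_pos), hl k, div_one]
  have hstrict : ∀ k, ¬ τ.symm k < i → Real.cos |θ j| < (l k).re := by
    intro k hk
    rw [hrel]
    have h1 : |Complex.arg (l k)| ≤ |Complex.arg (l (τ i))| := by
      have := hτ (not_lt.1 hk)
      simpa using this
    refine Real.cos_lt_cos_of_nonneg_of_le_pi (abs_nonneg _) ?_ (h1.trans_lt hlt)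
    rw [abs_le]
    have := hθrange j
    constructor <;> linarith [this.1, this.2]
  have lo : Real.cos |θ j| * (star x ⬝ᵥ x).re < ∑ k, (l k).re * Complex.normSq (Q.mulVec x k) := by
    rw [← unitary_normSq hQ x, Finset.mul_sum]
    have hQx0 : Q.mulVec x ≠ 0 := by
      intro h0
      apply hx0
      exact Matrix.mulVec_injective_of_isUnit (isUnit_of_unitary hQ) (by rw [h0, Matrix.mulVec_zero])
    obtain ⟨k, hk⟩ := Function.ne_iff.1 hQx0
    refine Finset.sum_lt_sum (fun k _ => ?_) ⟨k, Finset.mem_univ _, ?_⟩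
    · by_cases hk : τ.symm k < i
      · rw [hQx k hk]; simp
      · exact mul_le_mul_of_nonneg_right (hstrict k hk).le (Complex.normSq_nonneg _)
    · have hk' : ¬ τ.symm k < i := fun h => hk (hQx k h)
      exact mul_lt_mul_of_pos_right (hstrict k hk') (Complex.normSq_pos.2 hk)
  linarith

lemma phaseDiag_unitary (φ : Fin n → ℝ) : phaseDiag φ ∈ Matrix.unitaryGroup (Fin n) ℂ := by
  rw [Matrix.mem_unitaryGroup_iff', Matrix.star_eq_conjTranspose, phaseDiag,
    Matrix.diagonal_conjTranspose, Matrix.diagonal_mul_diagonal]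
  rw [← Matrix.diagonal_one]
  congr 1
  funext k
  simp only [Pi.star_apply, RCLike.star_def]
  rw [← Complex.normSq_eq_conj_mul_self, Complex.normSq_eq_norm_sq, mul_comm,
      Complex.norm_exp_ofReal_mul_I]
  simp

lemma conj_unitary {V D : Matrix (Fin n) (Fin n) ℂ} (hV : V ∈ Matrix.unitaryGroup (Fin n) ℂ)
    (hD : D ∈ Matrix.unitaryGroup (Fin n) ℂ) : Vᴴ * D * V ∈ Matrix.unitaryGroup (Fin n) ℂ :=
  mul_mem (mul_mem (Unitary.star_mem hV) hD) hV

lemma gauge_bound {Φ : (Fin n → ℝ) → ℝ} (hΦ : IsSymmetricGauge Φ) (hn : 1 ≤ n)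
    {V UB : Matrix (Fin n) (Fin n) ℂ} (θ : Fin n → ℝ) (r : ℕ)
    (hV : V ∈ Matrix.unitaryGroup (Fin n) ℂ)
    (hUB : UB ∈ Matrix.unitaryGroup (Fin n) ℂ)
    (hθsort : ∀ i j : Fin n, i ≤ j → |θ j| ≤ |θ i|)
    (hθrange : ∀ k, θ k ∈ Set.Ioo (-(Real.pi / 2)) (Real.pi / 2))
    (hrank : (UB - UBᴴ).rank ≤ r) (hpos : RePos UB) :
    Φ (eigArg ((Vᴴ * phaseDiag θ * V)ᴴ *
      (Vᴴ * phaseDiag (fun k : Fin n => if (k : ℕ) < r then θ k else 0) * V)))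
    ≤ Φ (eigArg ((Vᴴ * phaseDiag θ * V)ᴴ * UB)) := by
  have hpi := Real.pi_pos
  have hV2 : V * Vᴴ = 1 := (Matrix.mem_unitaryGroup_iff).1 hV
  -- the right-hand side
  have hWu : (Vᴴ * phaseDiag θ * V)ᴴ * UB ∈ Matrix.unitaryGroup (Fin n) ℂ :=
    mul_mem (Unitary.star_mem (conj_unitary hV (phaseDiag_unitary θ))) hUB
  obtain ⟨Q, hQ, l, hW⟩ := unitary_diag _ hWu
  have hl := norm_diag_unitary hWu hQ l hW
  obtain ⟨σ, hσ⟩ := eigArg_diag Q hQ l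
  rw [hW, hσ, hΦ.perm, ← hΦ.abs (fun k => Complex.arg (l k))]
  -- the left-hand side
  have hleft : (Vᴴ * phaseDiag θ * V)ᴴ *
      (Vᴴ * phaseDiag (fun k : Fin n => if (k : ℕ) < r then θ k else 0) * V)
      = Vᴴ * Matrix.diagonal (fun k : Fin n => Complex.exp (((if (k : ℕ) < r then 0 else -θ k : ℝ) : ℂ)
        * Complex.I)) * V := by
    calc _ = Vᴴ * ((phaseDiag θ)ᴴ * (V * Vᴴ) *
          phaseDiag (fun k : Fin n => if (k : ℕ) < r then θ k else 0)) * V := by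
          simp only [Matrix.conjTranspose_mul, Matrix.conjTranspose_conjTranspose, Matrix.mul_assoc]
      _ = _ := by
        rw [hV2, Matrix.mul_one, phaseDiag, phaseDiag, Matrix.diagonal_conjTranspose,
          Matrix.diagonal_mul_diagonal]
        congr 3
        funext k
        simp only [Pi.star_apply, RCLike.star_def, ← Complex.exp_conj]
        rw [← Complex.exp_add]
        congr 1
        split_ifs <;> simp [mul_comm]
  obtain ⟨σ', hσ'⟩ := eigArg_diag V hV (fun k : Fin n => Complex.exp
    (((if (k : ℕ) < r then 0 else -θ k : ℝ) : ℂ) * Complex.I))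
  rw [hleft, hσ', hΦ.perm]
  have harg : (fun k : Fin n => Complex.arg (Complex.exp
      (((if (k : ℕ) < r then 0 else -θ k : ℝ) : ℂ) * Complex.I)))
      = fun k : Fin n => (if (k : ℕ) < r then 0 else -θ k : ℝ) := by
    funext k
    rw [Complex.arg_exp_mul_I, toIocMod_eq_self]
    have := hθrange k
    split_ifs
    · constructor <;> linarith
    · constructor <;> linarith [this.1, this.2]
  rw [harg, ← hΦ.abs]
  -- sort the arguments
  set a : Fin n → ℝ := fun k => |Complex.arg (l k)| with ha
  set τ := Tuple.sort (fun k => - a k) with hτdef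
  have hmono := Tuple.monotone_sort (fun k => - a k)
  rw [← hτdef] at hmono
  have hτ : Antitone (a ∘ τ) := by
    intro i j hij
    have := hmono hij
    simp only [Function.comp] at this ⊢
    linarith
  have : NeZero n := ⟨by omega⟩
  rw [← hΦ.perm ((Equiv.subRight (Fin.ofNat n r)).trans τ) a]
  refine gauge_mono hΦ _ _ (fun k => abs_nonneg _) fun k => ?_
  by_cases hk : (k : ℕ) < r
  · simp [hk, ha]
  · rw [if_neg hk, abs_neg]
    have hrn : r < n := lt_of_le_of_lt (not_lt.1 hk) k.2
    have hv : ((Fin.ofNat n r : Fin n) : ℕ) = r := by simp [Nat.mod_eq_of_lt hrn]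
    refine count_bound θ r hV hQ hUB hθsort hθrange hrank hpos l hl hW τ hτ
      (k - Fin.ofNat n r) k ?_
    rw [Fin.sub_val_of_le (by rw [Fin.le_def, hv]; omega), hv]
    omega

/-- The unitary polar factor of a strictly positive-real matrix. -/
lemma polarU_props (hn : 1 ≤ n) {B : Matrix (Fin n) (Fin n) ℂ} (hB : StrictlyPositiveReal B)
    (r : ℕ) (hr : prank B ≤ r) : polarU B ∈ Matrix.unitaryGroup (Fin n) ℂ ∧
      (polarU B - (polarU B)ᴴ).rank ≤ r ∧ RePos (polarU B) := by
  by_cases hex : ∃ P U, IsSymPolarDecomp B P U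
  · obtain ⟨P, U, hPU⟩ := hex
    rw [(polar_eq hPU).2]
    obtain ⟨hP, hU, hUs, hBe⟩ := hPU
    have hPH : Pᴴ = P := hP.1
    have hPd : IsUnit P.det := (Matrix.isUnit_iff_isUnit_det _).1 hP.isUnit
    -- canonical phases exist
    have hcan : ∃ φ, IsCanonicalPhases B φ := by
      obtain ⟨Q, hQ, l, hQl⟩ := unitary_diag U hU
      have hl := norm_diag_unitary hU hQ l hQl
      rw [hQl] at hUs
      obtain ⟨α, φ, hφ, hlφ⟩ := sectorial_sector hn hQ l hl hUs
      have := canon_exists hn (Q * P) ((isUnit_of_unitary hQ).mul hP.isUnit) φ α hφ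
      have he : B = (Q * P)ᴴ * phaseDiag φ * (Q * P) := by
        rw [hBe, hQl, Matrix.conjTranspose_mul, hPH]
        have : Matrix.diagonal l = phaseDiag φ := by
          rw [phaseDiag]; congr 1; funext k; exact hlφ k
        rw [this]
        simp only [Matrix.mul_assoc]
      rwa [← he] at this
    have hrank : (B - Bᴴ).rank ≤ r := by rw [← prank_eq hcan hB.2]; exact hr
    have hBpos : RePos B := by
      obtain ⟨-, -, -, -, T, hT, hdec⟩ := phases_spec hcan
      rw [hdec]
      refine rePos_decomp hT fun k => ?_
      rw [exp_I_re]
      exact Real.cos_pos_of_mem_Ioo (hB.2 k)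
    refine ⟨hU, ?_, ?_⟩
    · have e : B - Bᴴ = P * (U - Uᴴ) * P := by
        rw [hBe]
        simp only [Matrix.conjTranspose_mul, hPH, Matrix.mul_sub, Matrix.sub_mul, Matrix.mul_assoc]
      rwa [e, Matrix.rank_mul_eq_left_of_isUnit_det _ _ hPd,
        Matrix.rank_mul_eq_right_of_isUnit_det _ _ hPd] at hrank
    · intro x hx
      have hPx : P.mulVec (P⁻¹.mulVec x) = x := by
        rw [Matrix.mulVec_mulVec, Matrix.mul_nonsing_inv _ hPd, Matrix.one_mulVec]
      have := hBpos (P⁻¹.mulVec x) (by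
        intro h0
        rw [h0, Matrix.mulVec_zero] at hPx
        exact hx hPx.symm)
      rw [hBe, ← Matrix.mulVec_mulVec, ← Matrix.mulVec_mulVec, hPx, Matrix.dotProduct_mulVec] at this
      have e : star (P⁻¹.mulVec x) ᵥ* P = star x := by
        have h2 := congrArg star hPx
        rwa [Matrix.star_mulVec P, hPH] at h2
      rwa [e] at this
  · have h1 : polarU B = 1 := by simp only [polarU, dif_neg hex]
    rw [h1]
    refine ⟨one_mem _, by simp, ?_⟩
    have := rePos_decomp (T := (1 : Matrix (Fin n) (Fin n) ℂ)) isUnit_one (d := fun _ => 1)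
      (fun _ => by simp)
    simpa using this

/-- the geodesic-distance low phase-rank approximation problem is
solved by truncating the phases of the unitary polar factor. -/
theorem geoDist_low_prank_approximation
    (hn : 1 ≤ n) (Φ₁ Φ₂ : (Fin n → ℝ) → ℝ)
    (hΦ₁ : IsSymmetricGauge Φ₁) (hΦ₂ : IsSymmetricGauge Φ₂)
    (A P U V : Matrix (Fin n) (Fin n) ℂ) (θ : Fin n → ℝ) (r : ℕ) (hr : r ≤ n)
    (hA : StrictlyPositiveReal A)
    (hPU : IsSymPolarDecomp A P U)
    (hV : V ∈ Matrix.unitaryGroup (Fin n) ℂ)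
    (hθsort : ∀ i j : Fin n, i ≤ j → |θ j| ≤ |θ i|)
    (hθrange : ∀ k, θ k ∈ Set.Ioo (-(Real.pi / 2)) (Real.pi / 2))
    (hU : U = Vᴴ * phaseDiag θ * V)
    (Ur Ar : Matrix (Fin n) (Fin n) ℂ)
    (hUr : Ur = Vᴴ * Matrix.diagonal (fun k : Fin n =>
      if (k : ℕ) < r then Complex.exp (Complex.I * (θ k : ℂ)) else 1) * V)
    (hAr : Ar = P * Ur * P) :
    StrictlyPositiveReal Ar ∧ prank Ar ≤ r ∧
    ∀ B : Matrix (Fin n) (Fin n) ℂ, StrictlyPositiveReal B → prank B ≤ r →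
      geoDist Φ₁ Φ₂ A Ar ≤ geoDist Φ₁ Φ₂ A B := by
  have hpi := Real.pi_pos
  set θ' : Fin n → ℝ := fun k => if (k : ℕ) < r then θ k else 0 with hθ'
  have hθ'r : ∀ k, θ' k ∈ Set.Ioo (-(Real.pi / 2)) (Real.pi / 2) := by
    intro k
    simp only [hθ']
    split_ifs
    · exact hθrange k
    · constructor <;> linarith
  have hUr' : Ur = Vᴴ * phaseDiag θ' * V := by
    rw [hUr, phaseDiag]
    congr 3
    funext k
    simp only [hθ']
    split_ifs <;> simp
  obtain ⟨hP, hUu, -, hAe⟩ := id hPU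
  have hPH : Pᴴ = P := hP.1
  have hVu := isUnit_of_unitary hV
  have hArd : Ar = (V * P)ᴴ * phaseDiag θ' * (V * P) := by
    rw [hAr, hUr', Matrix.conjTranspose_mul, hPH]
    simp only [Matrix.mul_assoc]
  have hcos : ∀ k, 0 < (Complex.exp (Complex.I * (θ' k : ℂ))).re := by
    intro k
    rw [exp_I_re]
    exact Real.cos_pos_of_mem_Ioo (hθ'r k)
  have hVP : IsUnit (V * P) := hVu.mul hP.isUnit
  have hcan : ∃ φ, IsCanonicalPhases Ar φ := by
    rw [hArd]
    refine canon_exists hn (V * P) hVP θ' 0 fun k => ?_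
    have := hθ'r k
    constructor <;> linarith [this.1, this.2]
  have hspr : StrictlyPositiveReal Ar := by
    refine spr_of_rePos hn hcan ?_
    rw [hArd]
    exact rePos_decomp hVP hcos
  have hUrpol : IsSymPolarDecomp Ar P Ur := by
    refine ⟨hP, ?_, ?_, hAr⟩
    · rw [hUr']; exact conj_unitary hV (phaseDiag_unitary θ')
    · rw [hUr']; exact rePos_sectorial (rePos_decomp hVu hcos)
  refine ⟨hspr, ?_, ?_⟩
  · rw [prank_eq hcan hspr.2]
    have e : Ar - Arᴴ = (V * P)ᴴ * (phaseDiag θ' - (phaseDiag θ')ᴴ) * (V * P) := by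
      rw [hArd]
      simp only [Matrix.conjTranspose_mul, Matrix.conjTranspose_conjTranspose, Matrix.mul_sub,
        Matrix.sub_mul, Matrix.mul_assoc]
    rw [e]
    refine (Matrix.rank_mul_le_left _ _).trans ((Matrix.rank_mul_le_right _ _).trans ?_)
    rw [phaseDiag, Matrix.diagonal_conjTranspose, Matrix.diagonal_sub, Matrix.rank_diagonal]
    have hlt : ∀ k : {k : Fin n // Complex.exp (Complex.I * (θ' k : ℂ)) -
        star (fun k => Complex.exp (Complex.I * (θ' k : ℂ))) k ≠ 0}, (k.1 : ℕ) < r := by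
      rintro ⟨k, hk⟩
      by_contra hcon
      exact hk (by simp [hθ', hcon])
    have := Fintype.card_le_of_injective (fun k => (⟨(k.1 : ℕ), hlt k⟩ : Fin r)) (by
      intro a b hab
      simp only [Fin.mk.injEq] at hab
      exact Subtype.ext (Fin.ext hab))
    simpa using this
  · intro B hB hBr
    obtain ⟨hBu, hBrank, hBpos⟩ := polarU_props hn hB r hBr
    obtain ⟨pA, uA⟩ := polar_eq hPU
    obtain ⟨pR, uR⟩ := polar_eq hUrpol
    have hPd : IsUnit P.det := (Matrix.isUnit_iff_isUnit_det _).1 hP.isUnit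
    have hone : P⁻¹ * P ^ 2 * P⁻¹ = 1 := by
      rw [pow_two, ← Matrix.mul_assoc, Matrix.nonsing_inv_mul _ hPd, Matrix.one_mul,
        Matrix.mul_nonsing_inv _ hPd]
    have key := gauge_bound hΦ₂ hn θ r hV hBu hθsort hθrange hBrank hBpos
    unfold geoDist
    rw [pA, pR, uA, uR, hone]
    apply Real.sqrt_le_sqrt
    have z : (fun k => Real.log (eigRe (1 : Matrix (Fin n) (Fin n) ℂ) k)) = 0 := by
      funext k; exact eigRe_one k
    rw [z, gauge_zero hΦ₁, hUr', hU]
    have h1 := pow_le_pow_left₀ (gauge_nonneg hΦ₂ _) key 2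
    have h2 := sq_nonneg (Φ₁ fun k => Real.log (eigRe (P⁻¹ * polarP B ^ 2 * P⁻¹) k))
    linarith

end LowPrank
end
end

section
/- Let n ≥ 1 and 0 ≤ r ≤ n. Let U, U_r ∈ ℂ^{n×n} be unitary matrices all of whose eigenvalues have arguments in (−π/2,π/2), and suppose at most r eigenvalues of U_r (counted with multiplicity) are different from 1. Let U = Vᴴ diag(e^{iθ₁},…,e^{iθₙ}) V be a unitary diagonalization with |θ₁| ≥ ⋯ ≥ |θₙ|, θ_k ∈ (−π/2,π/2), and set Û_r = Vᴴ diag(e^{iθ₁},…,e^{iθ_r},1,…,1) V. Then the vector of absolute values of the eigenvalue arguments of UᴴÛ_r is weakly submajorized by the vector of absolute values of the eigenvalue arguments of UᴴU_r: for every ℓ ∈ {1,…,n}, the sum of the ℓ largest absolute eigenvalue arguments of UᴴÛ_r is at most the sum of the ℓ largest absolute eigenvalue arguments of UᴴU_r. -/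
noncomputable section

open Matrix
open scoped Classical ComplexOrder

namespace LowPrank

variable {n : ℕ}

/-- The sum of the `m` largest entries of a multiset of reals. -/
noncomputable def sumLargest (s : Multiset ℝ) (m : ℕ) : ℝ :=
  ((s.sort (· ≤ ·)).reverse.take m).sum

/-- Spectral theorem for isometric endomorphisms of a finite dimensional complex space. -/
lemma exists_eigenbasis (T : EuclideanSpace ℂ (Fin n) →ₗ[ℂ] EuclideanSpace ℂ (Fin n))
    (hT : ∀ x y, inner ℂ (T x) (T y) = inner ℂ x y) :
    ∃ (b : OrthonormalBasis (Fin n) ℂ (EuclideanSpace ℂ (Fin n))) (w : Fin n → ℂ),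
      ∀ i, T (b i) = w i • b i := by
  have hort0 : ∀ μ ν : ℂ, μ ≠ ν → ∀ v w, T v = μ • v → T w = ν • w →
      inner ℂ v w = 0 := by
    intro μ ν hne v w hv hw
    by_contra hvw
    have h1 := hT v w
    rw [hv, hw, inner_smul_left, inner_smul_right] at h1
    have h2 : (starRingEnd ℂ) μ * ν = 1 := by
      have : ((starRingEnd ℂ) μ * ν) * inner ℂ v w = 1 * inner ℂ v w := by rw [mul_assoc, h1, one_mul]
      exact mul_right_cancel₀ hvw this
    have hv0 : inner ℂ v v ≠ 0 := by
      intro h; apply hvw; rw [inner_self_eq_zero.mp h, inner_zero_left]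
    have h3 := hT v v
    rw [hv, inner_smul_left, inner_smul_right] at h3
    have h4 : (starRingEnd ℂ) μ * μ = 1 := by
      have : ((starRingEnd ℂ) μ * μ) * inner ℂ v v = 1 * inner ℂ v v := by rw [mul_assoc, h3, one_mul]
      exact mul_right_cancel₀ hv0 this
    apply hne
    have h5 : (starRingEnd ℂ) μ ≠ 0 := by
      intro h; rw [h] at h4; simp at h4
    exact mul_left_cancel₀ h5 (h4.trans h2.symm)
  have hort : OrthogonalFamily ℂ (fun μ : Module.End.Eigenvalues T => Module.End.eigenspace T (μ : ℂ))
      fun μ => (Module.End.eigenspace T (μ : ℂ)).subtypeₗᵢ := by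
    intro μ ν hne v w
    apply hort0 μ ν (fun h => hne (Subtype.ext h)) v w
    · exact Module.End.mem_eigenspace_iff.mp v.2
    · exact Module.End.mem_eigenspace_iff.mp w.2
  have htop : (⨆ μ : ℂ, Module.End.eigenspace T μ)ᗮ = ⊥ := by
    set K := ⨆ μ : ℂ, Module.End.eigenspace T μ with hK
    have hmem : ∀ x, x ∈ Kᗮ ↔ ∀ (μ : ℂ) v, T v = μ • v → inner ℂ v x = 0 := by
      intro x
      rw [hK, ← Submodule.iInf_orthogonal]
      simp only [Submodule.mem_iInf, Submodule.mem_orthogonal, Module.End.mem_eigenspace_iff]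
    have hinv : ∀ x ∈ Kᗮ, T x ∈ Kᗮ := by
      intro x hx
      rw [hmem] at hx ⊢
      intro μ v hv
      have h1 := hT v x
      rw [hx μ v hv, hv, inner_smul_left] at h1
      rcases mul_eq_zero.mp h1 with h | h
      · have : T v = 0 := by rw [hv, (map_eq_zero _).mp h, zero_smul]
        have h2 := hT v v
        rw [this, inner_zero_left] at h2
        rw [inner_self_eq_zero.mp h2.symm, inner_zero_left]
      · exact h
    by_contra hne
    have : Nontrivial Kᗮ := Submodule.nontrivial_iff_ne_bot.mpr hne
    obtain ⟨μ, hμ⟩ := Module.End.exists_eigenvalue (T.restrict hinv)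
    obtain ⟨v, hv⟩ := hμ.exists_hasEigenvector
    have h1 : T v = μ • (v : EuclideanSpace ℂ (Fin n)) := by
      have := congrArg Subtype.val hv.apply_eq_smul
      simpa using this
    have h2 := (hmem v).mp v.2 μ v h1
    exact hv.2 (Subtype.ext (inner_self_eq_zero.mp h2))
  have hInternal : DirectSum.IsInternal
      (fun μ : Module.End.Eigenvalues T => Module.End.eigenspace T (μ : ℂ)) := by
    rw [hort.isInternal_iff]
    rw [← htop]
    congr 1
    exact iSup_ne_bot_subtype (fun μ => Module.End.eigenspace T μ)
  have hfr : Module.finrank ℂ (EuclideanSpace ℂ (Fin n)) = n := by simp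
  refine ⟨hInternal.subordinateOrthonormalBasis hfr hort,
    fun i => ((hInternal.subordinateOrthonormalBasisIndex hfr i hort : Module.End.Eigenvalues T) : ℂ), fun i => ?_⟩
  exact Module.End.mem_eigenspace_iff.mp
    (hInternal.subordinateOrthonormalBasis_subordinate hfr i hort)

lemma exists_unitary_diag (W : Matrix (Fin n) (Fin n) ℂ) (hW : W ∈ Matrix.unitaryGroup (Fin n) ℂ) :
    ∃ Q ∈ Matrix.unitaryGroup (Fin n) ℂ, ∃ w : Fin n → ℂ,
      W = Qᴴ * Matrix.diagonal w * Q := by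
  have hWW : Wᴴ * W = 1 := Matrix.mem_unitaryGroup_iff'.mp hW
  obtain ⟨b, w, hb⟩ := exists_eigenbasis (Matrix.toEuclideanLin W) (by
    intro x y
    rw [← LinearMap.adjoint_inner_right, ← Matrix.toEuclideanLin_conjTranspose_eq_adjoint]
    congr 1
    ext i
    simp [Matrix.toLpLin_apply, hWW])
  let P : Matrix (Fin n) (Fin n) ℂ := Matrix.of fun i j => b j i
  have hP : Pᴴ * P = 1 := by
    ext i j
    have := orthonormal_iff_ite.mp b.orthonormal i j
    rw [Matrix.one_apply, ← this, Matrix.mul_apply, PiLp.inner_apply]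
    refine Finset.sum_congr rfl fun k _ => ?_
    simp [P, mul_comm]
  have hP' : P * Pᴴ = 1 := mul_eq_one_comm.mp hP
  have hWP : W * P = P * Matrix.diagonal w := by
    ext i j
    have := congrArg (fun v : EuclideanSpace ℂ (Fin n) => v i) (hb j)
    simp [Matrix.toLpLin_apply, Matrix.mulVec, dotProduct] at this
    rw [Matrix.mul_diagonal, Matrix.mul_apply]
    simp [P, this, mul_comm]
  refine ⟨Pᴴ, ?_, w, ?_⟩
  · rw [Matrix.mem_unitaryGroup_iff]
    simpa [Matrix.star_eq_conjTranspose] using hP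
  · rw [Matrix.conjTranspose_conjTranspose, ← hWP, Matrix.mul_assoc, hP', Matrix.mul_one]

lemma roots_of_diag (W Q : Matrix (Fin n) (Fin n) ℂ) (w : Fin n → ℂ)
    (hQ : Q ∈ Matrix.unitaryGroup (Fin n) ℂ) (h : W = Qᴴ * Matrix.diagonal w * Q) :
    W.charpoly.roots = Finset.univ.val.map w := by
  have h1 : Qᴴ * Q = 1 := Matrix.mem_unitaryGroup_iff'.mp hQ
  have h2 : Q * Qᴴ = 1 := Matrix.mem_unitaryGroup_iff.mp hQ
  have h3 : W.charpoly = (Matrix.diagonal w).charpoly := by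
    rw [h, Matrix.charpoly_mul_comm, ← Matrix.mul_assoc, h2, Matrix.one_mul]
  rw [h3, Matrix.charpoly_diagonal]
  have h4 := Polynomial.roots_multiset_prod_X_sub_C (Finset.univ.val.map w)
  rw [Multiset.map_map] at h4
  exact h4

lemma form_of_diag (W Q : Matrix (Fin n) (Fin n) ℂ) (w : Fin n → ℂ)
    (h : W = Qᴴ * Matrix.diagonal w * Q) (x : Fin n → ℂ) :
    (star x ⬝ᵥ W *ᵥ x).re = ∑ k, (w k).re * ‖(Q *ᵥ x) k‖ ^ 2 := by
  have : star x ⬝ᵥ W *ᵥ x = ∑ k, w k * ((‖(Q *ᵥ x) k‖ ^ 2 : ℝ) : ℂ) := by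
    rw [h, ← Matrix.mulVec_mulVec, ← Matrix.mulVec_mulVec, Matrix.dotProduct_mulVec,
      ← Matrix.star_mulVec]
    simp only [dotProduct, Matrix.mulVec_diagonal, Pi.star_apply]
    refine Finset.sum_congr rfl fun k _ => ?_
    rw [Complex.ofReal_pow, ← Complex.conj_mul', Complex.star_def]
    ring
  rw [this, Complex.re_sum]
  simp only [Complex.re_mul_ofReal]

lemma norm_of_unitary (Q : Matrix (Fin n) (Fin n) ℂ)
    (hQ : Q ∈ Matrix.unitaryGroup (Fin n) ℂ) (x : Fin n → ℂ) :
    ∑ k, ‖(Q *ᵥ x) k‖ ^ 2 = (star x ⬝ᵥ x).re := by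
  have h1 : Qᴴ * Q = 1 := Matrix.mem_unitaryGroup_iff'.mp hQ
  have := form_of_diag 1 Q (fun _ => 1) (by simp [h1]) x
  simpa using this.symm

lemma norm_of_diag (W Q : Matrix (Fin n) (Fin n) ℂ) (w : Fin n → ℂ)
    (hQ : Q ∈ Matrix.unitaryGroup (Fin n) ℂ) (hW : W ∈ Matrix.unitaryGroup (Fin n) ℂ)
    (h : W = Qᴴ * Matrix.diagonal w * Q) (k : Fin n) : ‖w k‖ = 1 := by
  have h2 : Q * Qᴴ = 1 := Matrix.mem_unitaryGroup_iff.mp hQ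
  have hd : Matrix.diagonal w = Q * W * Qᴴ := by
    rw [h]
    simp only [Matrix.mul_assoc, h2, Matrix.mul_one]
    rw [← Matrix.mul_assoc, h2, Matrix.one_mul]
  have hmem : Matrix.diagonal w ∈ Matrix.unitaryGroup (Fin n) ℂ := by
    rw [hd]
    exact mul_mem (mul_mem hQ hW) (Unitary.star_mem hQ)
  have h3 := Matrix.mem_unitaryGroup_iff'.mp hmem
  rw [Matrix.star_eq_conjTranspose, Matrix.diagonal_conjTranspose, Matrix.diagonal_mul_diagonal] at h3
  have h4 := congrFun (congrFun h3 k) k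
  simp at h4
  rw [Complex.conj_mul'] at h4
  have h5 : ‖w k‖ ^ 2 = 1 := by exact_mod_cast h4
  nlinarith [norm_nonneg (w k)]

lemma sumLargest_le (s t : Multiset ℝ) (hc : s.card = t.card)
    (h : ∀ c : ℝ, s.countP (c ≤ ·) ≤ t.countP (c ≤ ·)) (m : ℕ) :
    sumLargest s m ≤ sumLargest t m := by
  have key : ∀ s : Multiset ℝ, ∃ l : List ℝ, (s.sort (· ≤ ·)).reverse = l ∧ (l : Multiset ℝ) = s ∧
      l.Pairwise (· ≥ ·) := by
    intro s
    refine ⟨_, rfl, ?_, ?_⟩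
    · rw [Multiset.coe_reverse, Multiset.sort_eq]
    · rw [List.pairwise_reverse]
      exact Multiset.pairwise_sort s (· ≤ ·)
  obtain ⟨a, ha, has, hap⟩ := key s
  obtain ⟨b, hb, hbt, hbp⟩ := key t
  unfold sumLargest
  rw [ha, hb]
  have hlen : a.length = b.length := by
    rw [← has, ← hbt] at hc; simpa using hc
  have hle : List.Forall₂ (· ≤ ·) a b := by
    rw [List.forall₂_iff_get]
    refine ⟨hlen, fun j hj hj' => ?_⟩
    simp only [List.get_eq_getElem]
    by_contra hlt
    push Not at hlt
    have hcnt := h a[j]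
    rw [← has, ← hbt, Multiset.coe_countP, Multiset.coe_countP] at hcnt
    have hA : j + 1 ≤ a.countP (fun x => decide (a[j] ≤ x)) := by
      calc j + 1 = (a.take (j+1)).countP (fun x => decide (a[j] ≤ x)) := by
            rw [List.countP_eq_length.mpr]
            · simp; omega
            · intro x hx
              obtain ⟨i, hi, rfl⟩ := List.getElem_of_mem hx
              simp only [List.length_take] at hi
              rw [List.getElem_take]
              rcases Nat.lt_or_ge i j with hij | hij
              · simpa using List.pairwise_iff_getElem.mp hap i j (by omega) hj hij
              · have : i = j := by omega
                subst this; simp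
        _ ≤ _ := (List.take_sublist _ _).countP_le
    have hB : b.countP (fun x => decide (a[j] ≤ x)) ≤ j := by
      rw [← List.take_append_drop j b, List.countP_append]
      have h0 : (b.drop j).countP (fun x => decide (a[j] ≤ x)) = 0 := by
        rw [List.countP_eq_zero]
        intro x hx
        obtain ⟨i, hi, rfl⟩ := List.getElem_of_mem hx
        rw [List.getElem_drop]
        simp only [List.length_drop] at hi
        have : b[j + i] ≤ b[j] := by
          rcases Nat.eq_zero_or_pos i with h0 | h0
          · subst h0; simp
          · exact List.pairwise_iff_getElem.mp hbp j (j+i) hj' (by omega) (by omega)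
        simp only [decide_eq_true_eq, not_le]
        linarith
      rw [h0]
      exact (List.countP_le_length).trans (by simp)
    omega
  exact (List.forall₂_take m hle).sum_le_sum

lemma countP_map_univ (f : Fin n → ℝ) (c : ℝ) :
    (Finset.univ.val.map f).countP (c ≤ ·) = (Finset.univ.filter (fun k => c ≤ f k)).card := by
  rw [Multiset.countP_map]; rfl

/-- A nonzero vector annihilated by too few linear conditions. -/
lemma exists_common (A B C : Matrix (Fin n) (Fin n) ℂ) (SA SB SC : Finset (Fin n))
    (h : SA.card + SB.card + SC.card < n) :
    ∃ x : Fin n → ℂ, x ≠ 0 ∧ (∀ k ∈ SA, (A *ᵥ x) k = 0) ∧ (∀ k ∈ SB, (B *ᵥ x) k = 0) ∧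
      (∀ k ∈ SC, (C *ᵥ x) k = 0) := by
  let F : (Fin n → ℂ) →ₗ[ℂ] ((SA → ℂ) × (SB → ℂ)) × (SC → ℂ) :=
    (((LinearMap.funLeft ℂ ℂ (Subtype.val : SA → Fin n)).comp A.mulVecLin).prod
      ((LinearMap.funLeft ℂ ℂ (Subtype.val : SB → Fin n)).comp B.mulVecLin)).prod
      ((LinearMap.funLeft ℂ ℂ (Subtype.val : SC → Fin n)).comp C.mulVecLin)
  have hk : LinearMap.ker F ≠ ⊥ := LinearMap.ker_ne_bot_of_finrank_lt (by simpa using h)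
  obtain ⟨x, hx, hx0⟩ := Submodule.exists_mem_ne_zero_of_ne_bot hk
  have hF : F x = 0 := hx
  have hA := congrArg (fun p => p.1.1) hF
  have hB := congrArg (fun p => p.1.2) hF
  have hC := congrArg (fun p => p.2) hF
  exact ⟨x, hx0, fun k hk => congrFun hA ⟨k, hk⟩, fun k hk => congrFun hB ⟨k, hk⟩,
    fun k hk => congrFun hC ⟨k, hk⟩⟩

lemma re_eq_cos_abs_arg (z : ℂ) (hz : ‖z‖ = 1) : z.re = Real.cos |Complex.arg z| := by
  rw [Real.cos_abs, Complex.cos_arg (by rintro rfl; simp at hz), hz, div_one]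

/-- weak submajorization of eigenvalue arguments for the phase truncation. -/
theorem eigArg_abs_weak_submajorized
    (hn : 1 ≤ n) (r : ℕ) (hr : r ≤ n)
    (U Ur V : Matrix (Fin n) (Fin n) ℂ) (θ : Fin n → ℝ)
    (hU : U ∈ Matrix.unitaryGroup (Fin n) ℂ)
    (hUr : Ur ∈ Matrix.unitaryGroup (Fin n) ℂ)
    (hUarg : ∀ z ∈ U.charpoly.roots, Complex.arg z ∈ Set.Ioo (-(Real.pi / 2)) (Real.pi / 2))
    (hUrarg : ∀ z ∈ Ur.charpoly.roots, Complex.arg z ∈ Set.Ioo (-(Real.pi / 2)) (Real.pi / 2))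
    (hcard : (Ur.charpoly.roots.filter (fun z => z ≠ 1)).card ≤ r)
    (hV : V ∈ Matrix.unitaryGroup (Fin n) ℂ)
    (hθsort : ∀ i j : Fin n, i ≤ j → |θ j| ≤ |θ i|)
    (hθrange : ∀ k, θ k ∈ Set.Ioo (-(Real.pi / 2)) (Real.pi / 2))
    (hUdiag : U = Vᴴ * phaseDiag θ * V)
    (Uhat : Matrix (Fin n) (Fin n) ℂ)
    (hUhat : Uhat = Vᴴ * Matrix.diagonal (fun k : Fin n =>
      if (k : ℕ) < r then Complex.exp (Complex.I * (θ k : ℂ)) else 1) * V) :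
    ∀ ℓ : ℕ, 1 ≤ ℓ → ℓ ≤ n →
      sumLargest (((Uᴴ * Uhat).charpoly.roots).map (fun z => |Complex.arg z|)) ℓ ≤
      sumLargest (((Uᴴ * Ur).charpoly.roots).map (fun z => |Complex.arg z|)) ℓ := by
  intro ℓ _ _
  have hVV : V * Vᴴ = 1 := Matrix.mem_unitaryGroup_iff.mp hV
  have hUH : Uᴴ = Vᴴ * Matrix.diagonal (fun k => Complex.exp (-(Complex.I * (θ k : ℂ)))) * V := by
    rw [hUdiag, Matrix.conjTranspose_mul, Matrix.conjTranspose_mul,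
      Matrix.conjTranspose_conjTranspose, phaseDiag, Matrix.diagonal_conjTranspose, Matrix.mul_assoc]
    congr 3
    funext k
    simp [← Complex.exp_conj]
  have hhat : Uᴴ * Uhat = Vᴴ * Matrix.diagonal (fun k : Fin n =>
      if (k : ℕ) < r then 1 else Complex.exp (((-θ k : ℝ) : ℂ) * Complex.I)) * V := by
    rw [hUH, hUhat]
    calc _ = Vᴴ * Matrix.diagonal (fun k => Complex.exp (-(Complex.I * (θ k : ℂ)))) * (V * Vᴴ) *
          Matrix.diagonal (fun k : Fin n =>
            if (k : ℕ) < r then Complex.exp (Complex.I * (θ k : ℂ)) else 1) * V := by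
          simp only [Matrix.mul_assoc]
      _ = _ := by
          rw [hVV, Matrix.mul_one, Matrix.mul_assoc Vᴴ, Matrix.diagonal_mul_diagonal]
          congr 3
          funext k
          split_ifs
          · rw [← Complex.exp_add]; simp
          · rw [mul_one]; congr 1; push_cast; ring
  have hWu : Uᴴ * Ur ∈ Matrix.unitaryGroup (Fin n) ℂ := mul_mem (Unitary.star_mem hU) hUr
  obtain ⟨Q, hQ, w, hw⟩ := exists_unitary_diag _ hWu
  obtain ⟨R, hR, u, hu⟩ := exists_unitary_diag _ hUr
  rw [roots_of_diag _ _ _ hV hhat, roots_of_diag _ _ _ hQ hw, Multiset.map_map, Multiset.map_map]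
  rw [roots_of_diag _ _ _ hR hu] at hcard
  have hcard' : (Finset.univ.filter (fun k => u k ≠ 1)).card ≤ r := by
    rw [← Multiset.countP_eq_card_filter, Multiset.countP_map] at hcard
    exact hcard
  apply sumLargest_le _ _ (by simp)
  intro c
  rw [countP_map_univ, countP_map_univ]
  simp only [Function.comp]
  have hf : ∀ k : Fin n, |Complex.arg (if (k : ℕ) < r then 1 else
      Complex.exp (((-θ k : ℝ) : ℂ) * Complex.I))| = if (k : ℕ) < r then 0 else |θ k| := by
    intro k
    have := hθrange k
    split_ifs
    · simp
    · rw [Complex.arg_exp_mul_I, (toIocMod_eq_self _).mpr, abs_neg]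
      constructor <;> linarith [this.1, this.2, Real.pi_pos]
  simp only [hf]
  by_contra hlt
  push Not at hlt
  have hcpos : 0 < c := by
    by_contra hc
    push Not at hc
    have : (Finset.univ.filter (fun k => c ≤ |Complex.arg (w k)|)) = Finset.univ :=
      Finset.filter_true_of_mem fun k _ => hc.trans (abs_nonneg _)
    rw [this] at hlt
    exact absurd hlt (not_lt.mpr (Finset.card_le_card (Finset.subset_univ _)))
  obtain ⟨k0, hk0⟩ := Finset.card_pos.mp (Nat.zero_lt_of_lt hlt)
  have hk0' : r ≤ (k0 : ℕ) ∧ c ≤ |θ k0| := by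
    have h := (Finset.mem_filter.mp hk0).2
    split_ifs at h with h'
    · linarith
    · exact ⟨not_lt.mp h', h⟩
  have hθa : ∀ k, |θ k| < Real.pi / 2 := fun k => abs_lt.mpr (hθrange k)
  have hcpi : c ≤ Real.pi := by linarith [hθa k0, hk0'.2, Real.pi_pos]
  have hcount : (Finset.univ.filter (fun k => |θ k| < c)).card +
      (Finset.univ.filter (fun k : Fin n => c ≤ if (k : ℕ) < r then 0 else |θ k|)).card + r ≤ n := by
    have hrc : (Finset.univ.filter (fun k : Fin n => (k : ℕ) < r)).card = r := by
      rw [Fin.card_filter_val_lt, min_eq_right hr]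
    have hd1 : Disjoint (Finset.univ.filter (fun k => |θ k| < c))
        (Finset.univ.filter (fun k : Fin n => c ≤ if (k : ℕ) < r then 0 else |θ k|)) := by
      rw [Finset.disjoint_filter]
      intro k _ h1 h2
      split_ifs at h2 <;> linarith
    have hd2 : Disjoint (Finset.univ.filter (fun k => |θ k| < c) ∪
        Finset.univ.filter (fun k : Fin n => c ≤ if (k : ℕ) < r then 0 else |θ k|))
        (Finset.univ.filter (fun k : Fin n => (k : ℕ) < r)) := by
      rw [Finset.disjoint_union_left, Finset.disjoint_filter, Finset.disjoint_filter]
      constructor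
      · intro k _ h1 h2
        have := hθsort k k0 (Fin.le_def.mpr (by omega))
        linarith [hk0'.2]
      · intro k _ h1 h2
        rw [if_pos h2] at h1
        linarith
    have h1 := Finset.card_union_of_disjoint hd1
    have h2 := Finset.card_union_of_disjoint hd2
    have h3 := Finset.card_le_univ ((Finset.univ.filter (fun k => |θ k| < c) ∪
        Finset.univ.filter (fun k : Fin n => c ≤ if (k : ℕ) < r then 0 else |θ k|)) ∪
        (Finset.univ.filter (fun k : Fin n => (k : ℕ) < r)))
    rw [Fintype.card_fin] at h3
    omega
  obtain ⟨x, hx0, hxV, hxQ, hxR⟩ := exists_common V Q R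
    (Finset.univ.filter (fun k => |θ k| < c))
    (Finset.univ.filter (fun k => c ≤ |Complex.arg (w k)|))
    (Finset.univ.filter (fun k => u k ≠ 1)) (by omega)
  simp only [Finset.mem_filter, Finset.mem_univ, true_and] at hxV hxQ hxR
  have hUrx : Ur *ᵥ x = x := by
    rw [hu, ← Matrix.mulVec_mulVec, ← Matrix.mulVec_mulVec]
    have : Matrix.diagonal u *ᵥ (R *ᵥ x) = R *ᵥ x := by
      funext k
      rw [Matrix.mulVec_diagonal]
      by_cases h : u k = 1
      · rw [h, one_mul]
      · rw [hxR k h, mul_zero]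
    rw [this, Matrix.mulVec_mulVec, show Rᴴ * R = 1 from Matrix.mem_unitaryGroup_iff'.mp hR,
      Matrix.one_mulVec]
  have hform : (Uᴴ * Ur) *ᵥ x = Uᴴ *ᵥ x := by rw [← Matrix.mulVec_mulVec, hUrx]
  have e1 := form_of_diag _ _ _ hw x
  rw [hform, form_of_diag _ _ _ hUH x] at e1
  have n1 := norm_of_unitary V hV x
  have n2 := norm_of_unitary Q hQ x
  have hUle : ∑ k, (Complex.exp (-(Complex.I * (θ k : ℂ)))).re * ‖(V *ᵥ x) k‖ ^ 2 ≤
      ∑ k, Real.cos c * ‖(V *ᵥ x) k‖ ^ 2 := by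
    refine Finset.sum_le_sum fun k _ => ?_
    by_cases h : |θ k| < c
    · rw [hxV k h]; simp
    · push Not at h
      refine mul_le_mul_of_nonneg_right ?_ (by positivity)
      have : (Complex.exp (-(Complex.I * (θ k : ℂ)))).re = Real.cos |θ k| := by
        rw [Real.cos_abs, Complex.exp_re]; simp
      rw [this]
      exact Real.cos_le_cos_of_nonneg_of_le_pi hcpos.le
        (by linarith [hθa k, Real.pi_pos]) h
  have hQx : ∃ k, (Q *ᵥ x) k ≠ 0 := by
    by_contra hall
    push Not at hall
    apply hx0
    have : Q *ᵥ x = 0 := funext hall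
    calc x = (Qᴴ * Q) *ᵥ x := by
          rw [show Qᴴ * Q = 1 from Matrix.mem_unitaryGroup_iff'.mp hQ, Matrix.one_mulVec]
      _ = 0 := by rw [← Matrix.mulVec_mulVec, this, Matrix.mulVec_zero]
  have hstrict : ∀ k, |Complex.arg (w k)| < c → Real.cos c < (w k).re := by
    intro k hk
    rw [re_eq_cos_abs_arg _ (norm_of_diag _ _ _ hQ hWu hw k)]
    exact Real.cos_lt_cos_of_nonneg_of_le_pi (abs_nonneg _) hcpi hk
  have hWlt : ∑ k, Real.cos c * ‖(Q *ᵥ x) k‖ ^ 2 < ∑ k, (w k).re * ‖(Q *ᵥ x) k‖ ^ 2 := by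
    refine Finset.sum_lt_sum (fun k _ => ?_) ?_
    · by_cases h : c ≤ |Complex.arg (w k)|
      · rw [hxQ k h]; simp
      · exact mul_le_mul_of_nonneg_right (hstrict k (not_le.mp h)).le (by positivity)
    · obtain ⟨k, hk⟩ := hQx
      refine ⟨k, Finset.mem_univ _, ?_⟩
      have h : |Complex.arg (w k)| < c := by
        by_contra h
        exact hk (hxQ k (not_lt.mp h))
      exact mul_lt_mul_of_pos_right (hstrict k h) (by positivity)
  rw [← Finset.mul_sum] at hUle hWlt
  rw [n1] at hUle
  rw [n2] at hWlt
  linarith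
end LowPrank
end
end
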